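/- arXiv:1310.5634 — 3 statements merged into one kernel-verified Lean document; each statement's English description precedes it below -/
import Mathlib

section
/- Let n and m be positive integers with n ≤ m ≤ (2n choose 2), and let G be a finite simple graph with exactly 2n vertices and m edges. Then the number of perfect matchings of G is at most ω(2n,m), where α := m - n·⌊m/n⌋ and ω(2n,m) := (⌊m/n⌋!)^{(n-α)/⌊m/n⌋} · (⌈m/n⌉!)^{α/⌈m/n⌉}. -/
open Nat

/-- The number of perfect matchings of a simple graph. -/
noncomputable def perfmat {V : Type*} (G : SimpleGraph V) : ℕ :=
  {M : G.Subgraph | M.IsPerfectMatching}.ncard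

/-- `ω(2n,m) = (⌊m/n⌋!)^{(n-α)/⌊m/n⌋} · (⌈m/n⌉!)^{α/⌈m/n⌉}` where `α = m - n⌊m/n⌋`. -/
noncomputable def omega2 (n m : ℕ) : ℝ :=
  ((m / n)! : ℝ) ^ (((n : ℝ) - ((m - n * (m / n) : ℕ) : ℝ)) / ((m / n : ℕ) : ℝ)) *
    (((m + n - 1) / n)! : ℝ) ^ (((m - n * (m / n) : ℕ) : ℝ) / (((m + n - 1) / n : ℕ) : ℝ))

/-!
The union of two perfect matchings of a graph consists of edges and even alternating cycles. Its
vertices can therefore be coloured so that moving along the first matching at one colour and along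
the second at the other is a permutation `τ` with every `v` adjacent to `τ v`. The colour classes of
an alternating cycle are cycles of `τ * τ`, so that a rule for colouring one of them first can be
read off from `τ`; then `τ` determines both matchings, and the square of the number of perfect
matchings is at most the number of such permutations. Brègman's theorem, proved here by Schrijver's
double counting, bounds the latter by `∏ v, (deg v)! ^ (1 / deg v)`. Since `log (d!) / d` is an
average of values of the concave function `log`, it is concave in `d`, and its secant through
`⌊m/n⌋` and `⌊m/n⌋ + 1` bounds the product in terms of the sum of the degrees.
-/

section ConcaveSequences

open Finset

lemma le_add_mul_sub_of_antitoneOn_sub {R : Type*} [CommRing R] [LinearOrder R]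
    [IsStrictOrderedRing R] {f : ℕ → R} {a q d : ℕ}
    (hf : AntitoneOn (fun r ↦ f (r + 1) - f r) (Set.Ici a)) (hq : a ≤ q) (hd : a ≤ d) :
    f d ≤ f q + ((d : R) - q) * (f (q + 1) - f q) := by
  rcases le_total q d with hqd | hdq
  · induction d, hqd using Nat.le_induction with
    | base => simp
    | succ d hqd ih =>
      have hslope := hf hq (hq.trans hqd) hqd
      have hbound := ih (hq.trans hqd)
      push_cast
      linarith
  · induction hdq using Nat.decreasingInduction with
    | self => simp
    | of_succ d hdq ih =>
      have hslope := hf hd hq hdq.le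
      have hbound := ih (hd.trans d.le_succ)
      push_cast at hbound
      linarith

variable {𝕜 : Type*} [Field 𝕜] [LinearOrder 𝕜] [IsStrictOrderedRing 𝕜] {x : ℕ → 𝕜}

-- Equivalent, up to a positive factor, to `a (r + 2) - a (r + 1) ≤ a (r + 1) - a r` for the
-- averages `a r` of the first `r` terms; cleared of denominators it is amenable to induction.
lemma two_mul_sum_range_le_of_antitone_sub (hx : Antitone fun i ↦ x (i + 1) - x i) (r : ℕ) :
    2 * ∑ i ∈ range r, x i ≤ r * (r + 3) * x r - r * (r + 1) * x (r + 1) := by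
  induction r with
  | zero => simp
  | succ r ih =>
    have hconc : 0 ≤ ((r : 𝕜) + 1) * (r + 2) * ((x (r + 1) - x r) - (x (r + 2) - x (r + 1))) :=
      mul_nonneg (by positivity) (sub_nonneg.2 (hx r.le_succ))
    rw [sum_range_succ]
    push_cast
    linarith

lemma antitoneOn_sub_average_of_antitone_sub (hx : Antitone fun i ↦ x (i + 1) - x i) :
    AntitoneOn
      (fun r : ℕ ↦ (∑ i ∈ range (r + 1), x i) / ((r + 1 : ℕ) : 𝕜) - (∑ i ∈ range r, x i) / (r : 𝕜))
      (Set.Ici 1) := by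
  refine antitoneOn_nat_Ici_of_succ_le fun r hr ↦ ?_
  have : (0 : 𝕜) < r := Nat.cast_pos.2 hr
  rw [sum_range_succ x (r + 1), sum_range_succ x r, ← sub_nonneg]
  set S := ∑ i ∈ range r, x i
  have hclear : (S + x r) / ((r + 1 : ℕ) : 𝕜) - S / r -
      ((S + x r + x (r + 1)) / ((r + 1 + 1 : ℕ) : 𝕜) - (S + x r) / ((r + 1 : ℕ) : 𝕜)) =
      (r * (r + 3) * x r - r * (r + 1) * x (r + 1) - 2 * S) / (r * (r + 1) * (r + 2)) := by
    push_cast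
    rw [add_assoc (r : 𝕜) 1 1, one_add_one_eq_two]
    field_simp
    ring
  rw [hclear]
  exact div_nonneg (sub_nonneg.2 (two_mul_sum_range_le_of_antitone_sub hx r)) (by positivity)

end ConcaveSequences

section FactorialRoot

open Finset

/-- The geometric mean `(d!)^{1/d}` of `1, …, d`: the factor contributed to Brègman's bound by a
point with `d` admissible images. For `d = 0` the exponent is the junk value `0⁻¹ = 0`, so that
the factor is `1`. -/
noncomputable def factorialRoot (d : ℕ) : ℝ := (d ! : ℝ) ^ (d : ℝ)⁻¹

lemma factorialRoot_pos (d : ℕ) : 0 < factorialRoot d :=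
  Real.rpow_pos_of_pos (mod_cast d.factorial_pos) _

lemma log_factorialRoot (d : ℕ) : Real.log (factorialRoot d) = Real.log (d ! : ℝ) / d := by
  rw [factorialRoot, Real.log_rpow (mod_cast d.factorial_pos), inv_mul_eq_div]

lemma mul_log_factorialRoot (d : ℕ) : d * Real.log (factorialRoot d) = Real.log (d ! : ℝ) := by
  rcases eq_or_ne d 0 with rfl | hd
  · simp
  · rw [log_factorialRoot]
    field_simp

lemma log_factorial_eq_sum (d : ℕ) :
    Real.log (d ! : ℝ) = ∑ i ∈ range d, Real.log ((i : ℝ) + 1) := by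
  rw [← prod_range_add_one_eq_factorial, Nat.cast_prod, Real.log_prod fun i _ ↦ by positivity]
  push_cast
  rfl

lemma antitone_sub_log_add_one :
    Antitone fun i : ℕ ↦ Real.log (((i + 1 : ℕ) : ℝ) + 1) - Real.log ((i : ℝ) + 1) := by
  refine antitone_nat_of_succ_le fun i ↦ ?_
  rw [← Real.log_div (by positivity) (by positivity),
    ← Real.log_div (by positivity) (by positivity)]
  refine Real.log_le_log (by positivity) ?_
  rw [div_le_div_iff₀ (by positivity) (by positivity)]
  push_cast
  nlinarith

lemma antitoneOn_sub_log_factorialRoot :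
    AntitoneOn (fun d ↦ Real.log (factorialRoot (d + 1)) - Real.log (factorialRoot d))
      (Set.Ici 1) := by
  simp only [log_factorialRoot, log_factorial_eq_sum]
  exact antitoneOn_sub_average_of_antitone_sub antitone_sub_log_add_one

lemma sum_log_factorialRoot_le {ι : Type*} (s : Finset ι) {d : ι → ℕ} (hd : ∀ i ∈ s, 1 ≤ d i)
    {q : ℕ} (hq : 1 ≤ q) :
    ∑ i ∈ s, Real.log (factorialRoot (d i)) ≤
      #s * Real.log (factorialRoot q) + ((∑ i ∈ s, d i : ℕ) - #s * (q : ℝ)) *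
        (Real.log (factorialRoot (q + 1)) - Real.log (factorialRoot q)) := by
  refine (sum_le_sum fun i hi ↦ le_add_mul_sub_of_antitoneOn_sub
    (f := fun d ↦ Real.log (factorialRoot d)) antitoneOn_sub_log_factorialRoot hq
    (hd i hi)).trans_eq ?_
  rw [sum_add_distrib, ← sum_mul, sum_sub_distrib, sum_const, sum_const, nsmul_eq_mul,
    nsmul_eq_mul, Nat.cast_sum]

lemma omega2_pos (n m : ℕ) : 0 < omega2 n m := by
  unfold omega2
  positivity

lemma log_omega2 {n : ℕ} (hn : 0 < n) (m : ℕ) :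
    Real.log (omega2 n m) = n * Real.log (factorialRoot (m / n)) +
      ((m : ℝ) - n * (m / n : ℕ)) *
        (Real.log (factorialRoot (m / n + 1)) - Real.log (factorialRoot (m / n))) := by
  have hα : ((m - n * (m / n) : ℕ) : ℝ) = (m : ℝ) - n * (m / n : ℕ) := by
    rw [Nat.cast_sub (Nat.mul_div_le m n), Nat.cast_mul]
  rw [omega2, Real.log_mul (by positivity) (by positivity), Real.log_rpow (by positivity),
    Real.log_rpow (by positivity)]
  simp only [log_factorialRoot]
  rcases (m % n).eq_zero_or_pos with hdvd | hmod
  · have hα₀ : m - n * (m / n) = 0 := by rw [← Nat.mod_eq_sub, hdvd]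
    rw [← hα, hα₀, Nat.cast_zero]
    ring
  · have hceil : (m + n - 1) / n = m / n + 1 := by
      rw [Nat.div_eq_iff hn, Nat.add_mul, Nat.mul_comm (m / n)]
      have := Nat.div_add_mod m n
      have := Nat.mod_lt m hn
      omega
    rw [hα, hceil]
    ring

end FactorialRoot

section Bregman

open Finset

lemma sum_mul_log_sum_div_card_le {κ : Type*} (s : Finset κ) {p : κ → ℝ}
    (hp : ∀ k ∈ s, 0 ≤ p k) :
    (∑ k ∈ s, p k) * Real.log ((∑ k ∈ s, p k) / #s) ≤ ∑ k ∈ s, p k * Real.log (p k) := by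
  rcases s.eq_empty_or_nonempty with rfl | hs
  · simp
  have hcard : (0 : ℝ) < #s := mod_cast hs.card_pos
  have hjensen := Real.convexOn_mul_log.map_sum_le (t := s) (w := fun _ ↦ (#s : ℝ)⁻¹)
    (fun _ _ ↦ by positivity) (by simp [hcard.ne']) hp
  simp only [smul_eq_mul, ← mul_sum] at hjensen
  rwa [mul_assoc, mul_le_mul_iff_right₀ (inv_pos.2 hcard), inv_mul_eq_div] at hjensen

lemma card_mul_log_card_le_of_maps_to {α κ : Type*} [DecidableEq κ] {s : Finset α} {t : Finset κ}
    {f : α → κ} (hf : ∀ a ∈ s, f a ∈ t) :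
    #s * Real.log #s ≤ ∑ a ∈ s, (Real.log #t + Real.log #{b ∈ s | f b = f a}) := by
  rcases s.eq_empty_or_nonempty with rfl | hs
  · simp
  have hs₀ : (#s : ℝ) ≠ 0 := mod_cast hs.card_pos.ne'
  have ht₀ : (#t : ℝ) ≠ 0 := mod_cast (hs.elim fun a ha ↦ card_pos.2 ⟨f a, hf a ha⟩).ne'
  have hcard : ∑ k ∈ t, (#{b ∈ s | f b = k} : ℝ) = #s :=
    mod_cast (card_eq_sum_card_fiberwise hf).symm
  have hfiber : ∑ k ∈ t, (#{b ∈ s | f b = k} : ℝ) * Real.log #{b ∈ s | f b = k} =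
      ∑ a ∈ s, Real.log #{b ∈ s | f b = f a} := by
    simp only [← nsmul_eq_mul, ← sum_const]
    exact sum_fiberwise_of_maps_to' hf fun k ↦ Real.log #{b ∈ s | f b = k}
  have hentropy := sum_mul_log_sum_div_card_le t (p := fun k ↦ (#{b ∈ s | f b = k} : ℝ))
    fun _ _ ↦ by positivity
  rw [hcard, hfiber, Real.log_div hs₀ ht₀] at hentropy
  rw [sum_add_distrib, sum_const, nsmul_eq_mul]
  linarith

variable {ι κ : Type*} [DecidableEq κ]

lemma log_card_add_sum_log_factorialRoot_erase [Fintype κ] {s : Finset κ} {k₀ : κ}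
    (hk₀ : k₀ ∈ s) :
    Real.log #s + ∑ k ∈ univ.erase k₀, Real.log (factorialRoot #(s.erase k)) =
      Fintype.card κ * Real.log (factorialRoot #s) := by
  have hsplit : univ.erase k₀ = s.erase k₀ ∪ sᶜ := by
    rw [← union_compl s, erase_union_distrib, erase_eq_of_notMem (notMem_compl.2 hk₀)]
  have hdisj : Disjoint (s.erase k₀) sᶜ := disjoint_compl_right.mono_left (erase_subset _ _)
  have hin : ∑ k ∈ s.erase k₀, Real.log (factorialRoot #(s.erase k)) =
      Real.log ((#s - 1)! : ℝ) := by
    rw [← mul_log_factorialRoot, ← nsmul_eq_mul, ← card_erase_of_mem hk₀, ← sum_const]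
    refine sum_congr rfl fun k hk ↦ ?_
    rw [card_erase_of_mem hk₀, card_erase_of_mem (mem_of_mem_erase hk)]
  have hout : ∑ k ∈ sᶜ, Real.log (factorialRoot #(s.erase k)) =
      (Fintype.card κ - #s) * Real.log (factorialRoot #s) := by
    rw [← Nat.cast_sub (card_le_univ s), ← card_compl, ← nsmul_eq_mul, ← sum_const]
    refine sum_congr rfl fun k hk ↦ ?_
    rw [erase_eq_of_notMem (mem_compl.1 hk)]
  have hfact : Real.log ((#s)! : ℝ) = Real.log #s + Real.log ((#s - 1)! : ℝ) := by
    have hs : #s ≠ 0 := card_ne_zero_of_mem hk₀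
    rw [← Nat.mul_factorial_pred hs, Nat.cast_mul, Real.log_mul (by positivity) (by positivity)]
  rw [hsplit, sum_union hdisj, hin, hout, sub_mul, mul_log_factorialRoot, hfact]
  ring

/-- The admissible images that remain for the other points after `i` has been sent to `k`: the
analogue of the minor of a matrix. -/
def eraseBoth (t : ι → Finset κ) (i : ι) (k : κ) (j : {j // j ≠ i}) : Finset {l // l ≠ k} :=
  (t j).subtype (· ≠ k)

lemma card_eraseBoth (t : ι → Finset κ) (i : ι) (k : κ) (j : {j // j ≠ i}) :
    #(eraseBoth t i k j) = #((t j).erase k) := by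
  rw [eraseBoth, card_subtype, filter_ne']

variable [Fintype ι] [DecidableEq ι] [Fintype κ]

/-- The bijections `e` with `e i ∈ t i` for all `i`, that is, the perfect matchings of the bipartite
graph in which `i` has neighbourhood `t i`. Their number is the permanent of its adjacency
matrix. -/
def bijectionsInto (t : ι → Finset κ) : Finset (ι ≃ κ) := {e | ∀ i, e i ∈ t i}

lemma mem_bijectionsInto {t : ι → Finset κ} {e : ι ≃ κ} :
    e ∈ bijectionsInto t ↔ ∀ i, e i ∈ t i := by
  simp [bijectionsInto]

lemma card_bijectionsInto_apply_eq_le (t : ι → Finset κ) (i : ι) (k : κ) :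
    #{e ∈ bijectionsInto t | e i = k} ≤ #(bijectionsInto (eraseBoth t i k)) := by
  have hmem {e : ι ≃ κ} (he : e ∈ {e ∈ bijectionsInto t | e i = k}) :
      (∀ j, e j ∈ t j) ∧ e i = k := by
    rwa [mem_filter, mem_bijectionsInto] at he
  have hne {e : ι ≃ κ} (he : e i = k) (j : ι) : j ≠ i ↔ e j ≠ k := by
    rw [← he, e.injective.ne_iff]
  rw [← card_attach]
  refine card_le_card_of_injOn (fun e ↦ e.1.subtypeEquiv (hne (hmem e.2).2))
    (fun e _ ↦ ?_) (fun e _ e' _ hee' ↦ ?_)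
  · rw [mem_coe, mem_bijectionsInto]
    exact fun j ↦ mem_subtype.2 ((hmem e.2).1 j)
  · refine Subtype.ext (Equiv.ext fun j ↦ ?_)
    by_cases hj : j = i
    · rw [hj, (hmem e.2).2, (hmem e'.2).2]
    · exact congrArg Subtype.val (Equiv.congr_fun hee' ⟨j, hj⟩)

-- Row `j` keeps its size in the minors at `(i, e i)` with `e i ∉ t j` and loses one element in
-- those with `e i ∈ t j`; both kinds are counted by letting `e i` run over `κ \ {e j}`.
lemma sum_log_card_add_sum_eraseBoth {t : ι → Finset κ} {e : ι ≃ κ} (he : e ∈ bijectionsInto t) :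
    ∑ i, (Real.log #(t i) + ∑ j, Real.log (factorialRoot #(eraseBoth t i (e i) j))) =
      Fintype.card κ * ∑ j, Real.log (factorialRoot #(t j)) := by
  have hminor (i : ι) : ∑ j, Real.log (factorialRoot #(eraseBoth t i (e i) j)) =
      ∑ j ∈ univ.erase i, Real.log (factorialRoot #((t j).erase (e i))) := by
    simp only [card_eraseBoth]
    exact (sum_subtype _ (by simp) fun j ↦ Real.log (factorialRoot #((t j).erase (e i)))).symm
  have hrow (j : ι) : ∑ i ∈ univ.erase j, Real.log (factorialRoot #((t j).erase (e i))) =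
      ∑ k ∈ univ.erase (e j), Real.log (factorialRoot #((t j).erase k)) :=
    sum_equiv e (by simp) (by simp)
  have hswap : ∑ i, ∑ j ∈ univ.erase i, Real.log (factorialRoot #((t j).erase (e i))) =
      ∑ j, ∑ i ∈ univ.erase j, Real.log (factorialRoot #((t j).erase (e i))) :=
    sum_comm' (by simp [ne_comm])
  simp only [sum_add_distrib, hminor, hswap, hrow]
  rw [← sum_add_distrib, mul_sum]
  exact sum_congr rfl fun j _ ↦
    log_card_add_sum_log_factorialRoot_erase (mem_bijectionsInto.1 he j)

lemma card_mul_card_mul_log_card_bijectionsInto_le (t : ι → Finset κ) :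
    Fintype.card ι * (#(bijectionsInto t) * Real.log #(bijectionsInto t)) ≤
      ∑ e ∈ bijectionsInto t, ∑ i,
        (Real.log #(t i) + Real.log #{e' ∈ bijectionsInto t | e' i = e i}) := by
  rw [sum_comm, ← nsmul_eq_mul, ← Finset.card_univ]
  exact card_nsmul_le_sum _ _ _ fun i _ ↦
    card_mul_log_card_le_of_maps_to fun e he ↦ mem_bijectionsInto.1 he i

/-- **Brègman's theorem** (Minc's conjecture). -/
theorem card_bijectionsInto_le_prod_factorialRoot (t : ι → Finset κ) :
    (#(bijectionsInto t) : ℝ) ≤ ∏ i, factorialRoot #(t i) := by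
  induction hι : Fintype.card ι generalizing ι κ with
  | zero =>
    have : IsEmpty ι := Fintype.card_eq_zero_iff.1 hι
    rw [univ_eq_empty, prod_empty]
    exact mod_cast card_le_one.2 fun _ _ _ _ ↦ Equiv.ext isEmptyElim
  | succ n ih =>
    rcases (bijectionsInto t).eq_empty_or_nonempty with hS | hS
    · rw [hS, card_empty, Nat.cast_zero]
      exact prod_nonneg fun i _ ↦ (factorialRoot_pos _).le
    have hκ : Fintype.card κ = n + 1 := by
      obtain ⟨e, -⟩ := hS
      rw [← hι, Fintype.card_congr e]
    have hS₀ : (0 : ℝ) < #(bijectionsInto t) := mod_cast hS.card_pos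
    have hminor {e : ι ≃ κ} (he : e ∈ bijectionsInto t) (i : ι) :
        Real.log #{e' ∈ bijectionsInto t | e' i = e i} ≤
          ∑ j, Real.log (factorialRoot #(eraseBoth t i (e i) j)) := by
      have hfiber : 0 < #{e' ∈ bijectionsInto t | e' i = e i} := card_pos.2 ⟨e, by simp [he]⟩
      rw [← Real.log_prod fun j _ ↦ (factorialRoot_pos _).ne']
      refine Real.log_le_log (mod_cast hfiber) ?_
      exact (Nat.cast_le.2 (card_bijectionsInto_apply_eq_le t i (e i))).trans
        (ih (eraseBoth t i (e i)) (by simp [hι]))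
    have htotal : (n + 1 : ℕ) * (#(bijectionsInto t) * Real.log #(bijectionsInto t)) ≤
        #(bijectionsInto t) * ((n + 1 : ℕ) * ∑ i, Real.log (factorialRoot #(t i))) := by
      rw [← hι]
      refine (card_mul_card_mul_log_card_bijectionsInto_le t).trans ?_
      rw [← nsmul_eq_mul (#(bijectionsInto t))]
      refine sum_le_card_nsmul _ _ _ fun e he ↦ ?_
      rw [hι, ← hκ, ← sum_log_card_add_sum_eraseBoth he]
      gcongr with i
      exact hminor he i
    rw [← Real.log_le_log_iff hS₀ (prod_pos fun i _ ↦ factorialRoot_pos _),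
      Real.log_prod fun i _ ↦ (factorialRoot_pos _).ne']
    rw [mul_left_comm] at htotal
    exact le_of_mul_le_mul_left (le_of_mul_le_mul_left htotal hS₀) (by positivity)

end Bregman

section Pairings

open Equiv Function

/-- A fixed-point-free involution of `V`: a perfect matching of the complete graph on `V`, given by
sending every point to its partner. -/
structure IsPairing {V : Type*} (σ : Perm V) : Prop where
  involutive : Involutive σ
  apply_ne (x : V) : σ x ≠ x

/-- The cycle of `π` through `x` comes before the one through `y` in a fixed well-ordering of the
subsets of `V`. Cycles are compared as sets, so that this depends only on the partition of `V` into
cycles. -/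
def CyclePrecedes {V : Type*} (π : Perm V) (x y : V) : Prop :=
  WellOrderingRel {z | π.SameCycle x z} {z | π.SameCycle y z}

variable {V : Type*} {π σ ρ : Perm V} {x y x' y' : V}

lemma setOf_sameCycle_eq_iff :
    {z | π.SameCycle x z} = {z | π.SameCycle y z} ↔ π.SameCycle x y := by
  refine ⟨fun h ↦ ?_, fun h ↦ Set.ext fun z ↦ ⟨h.symm.trans, h.trans⟩⟩
  have hy : y ∈ {z | π.SameCycle x z} := h ▸ Perm.SameCycle.refl π y
  exact hy

lemma cyclePrecedes_congr (hx : π.SameCycle x x') (hy : π.SameCycle y y') :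
    CyclePrecedes π x y ↔ CyclePrecedes π x' y' := by
  rw [CyclePrecedes, setOf_sameCycle_eq_iff.2 hx, setOf_sameCycle_eq_iff.2 hy, CyclePrecedes]

lemma cyclePrecedes_comm_iff_not (h : ¬ π.SameCycle x y) :
    CyclePrecedes π y x ↔ ¬ CyclePrecedes π x y := by
  refine ⟨asymm_of WellOrderingRel, fun hxy ↦ ?_⟩
  exact ((trichotomous_of WellOrderingRel _ _).resolve_left hxy).resolve_left
    (mt setOf_sameCycle_eq_iff.1 h)

lemma sameCycle_of_forall_sameCycle_apply {π' : Perm V} (hπ : ∀ z, π'.SameCycle (π z) z)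
    (h : π.SameCycle x y) : π'.SameCycle x y := by
  obtain ⟨k, rfl⟩ := h
  induction k using Int.induction_on with
  | zero => rfl
  | succ k ih =>
    rw [add_comm, zpow_one_add, Perm.mul_apply]
    exact ih.trans (hπ _).symm
  | pred k ih =>
    have hstep := hπ ((π ^ (-(k : ℤ) - 1)) x)
    rw [← Perm.mul_apply, ← zpow_one_add, add_sub_cancel] at hstep
    exact ih.trans hstep

lemma apply_zpow_mul_apply (hσ : Involutive σ) (hρ : Involutive ρ) (k : ℤ) (x : V) :
    σ (((σ * ρ) ^ k) x) = ((σ * ρ) ^ (-k)) (σ x) := by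
  have hσ' : σ * σ = 1 := Equiv.ext hσ
  have hρ' : ρ * ρ = 1 := Equiv.ext hρ
  have hconj : SemiconjBy σ (σ * ρ) (σ * ρ)⁻¹ := by
    rw [SemiconjBy, mul_inv_rev, inv_eq_of_mul_eq_one_left hσ', inv_eq_of_mul_eq_one_left hρ',
      ← mul_assoc, hσ', mul_assoc, hσ', one_mul, mul_one]
  rw [zpow_neg, ← inv_zpow]
  exact Equiv.congr_fun (hconj.zpow_right k) x

-- An alternating walk from `x` to `σ x` has a middle step, which would be a fixed point of `σ`
-- or `ρ`: alternating cycles have even length.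
lemma not_sameCycle_mul_apply (hσ : IsPairing σ) (hρ : IsPairing ρ) (x : V) :
    ¬ (σ * ρ).SameCycle x (σ x) := by
  rintro ⟨k, hk⟩
  rcases Int.even_or_odd' k with ⟨j, rfl | rfl⟩
  · apply hσ.apply_ne (((σ * ρ) ^ j) x)
    rw [apply_zpow_mul_apply hσ.involutive hρ.involutive, ← hk, ← Perm.mul_apply, ← zpow_add]
    congr 2
    ring
  · apply hρ.apply_ne (((σ * ρ) ^ j) x)
    have hstep : ρ (((σ * ρ) ^ j) x) = σ (((σ * ρ) ^ (1 + j)) x) := by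
      rw [zpow_one_add, Perm.mul_apply, Perm.mul_apply, hσ.involutive]
    rw [hstep, apply_zpow_mul_apply hσ.involutive hρ.involutive, ← hk, ← Perm.mul_apply, ← zpow_add]
    congr 2
    ring

/-- One of the two colours of a proper 2-colouring of the graph `σ ∪ ρ`. The alternating cycle
through `x` splits into the cycles of `σ * ρ` through `x` and through `σ x`, and these are its two
colour classes. -/
def IsLeading {V : Type*} (σ ρ : Perm V) (x : V) : Prop := CyclePrecedes (σ * ρ) x (σ x)

lemma isLeading_left_apply_iff (hσ : IsPairing σ) (hρ : IsPairing ρ) (x : V) :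
    IsLeading σ ρ (σ x) ↔ ¬ IsLeading σ ρ x := by
  rw [IsLeading, hσ.involutive]
  exact cyclePrecedes_comm_iff_not (not_sameCycle_mul_apply hσ hρ x)

lemma sameCycle_mul_right_apply (hρ : Involutive ρ) (x : V) :
    (σ * ρ).SameCycle (ρ x) (σ x) :=
  ⟨1, by simp [hρ x]⟩

lemma isLeading_right_apply_iff (hσ : IsPairing σ) (hρ : IsPairing ρ) (x : V) :
    IsLeading σ ρ (ρ x) ↔ ¬ IsLeading σ ρ x := by
  have hx : (σ * ρ).SameCycle (σ (ρ x)) x := Perm.SameCycle.symm ⟨1, by simp⟩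
  rw [IsLeading, cyclePrecedes_congr (sameCycle_mul_right_apply hρ.involutive x) hx]
  exact cyclePrecedes_comm_iff_not (not_sameCycle_mul_apply hσ hρ x)

open scoped Classical in
/-- The permutation that runs through the alternating cycles of `σ ∪ ρ`, oriented so that leading
points move along `σ` and the others along `ρ`. -/
noncomputable def alternate (hσ : IsPairing σ) (hρ : IsPairing ρ) : Perm V where
  toFun x := if IsLeading σ ρ x then σ x else ρ x
  invFun x := if IsLeading σ ρ x then ρ x else σ x
  left_inv x := by
    by_cases h : IsLeading σ ρ x <;>
      simp [h, isLeading_left_apply_iff hσ hρ, isLeading_right_apply_iff hσ hρ, hσ.involutive x,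
        hρ.involutive x]
  right_inv x := by
    by_cases h : IsLeading σ ρ x <;>
      simp [h, isLeading_left_apply_iff hσ hρ, isLeading_right_apply_iff hσ hρ, hσ.involutive x,
        hρ.involutive x]

variable (hσ : IsPairing σ) (hρ : IsPairing ρ)

lemma alternate_apply_of_isLeading (h : IsLeading σ ρ x) : alternate hσ hρ x = σ x :=
  if_pos h

lemma alternate_apply_of_not_isLeading (h : ¬ IsLeading σ ρ x) : alternate hσ hρ x = ρ x :=
  if_neg h

lemma alternate_apply_eq_or (x : V) : alternate hσ hρ x = σ x ∨ alternate hσ hρ x = ρ x := by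
  by_cases h : IsLeading σ ρ x
  · exact .inl (alternate_apply_of_isLeading hσ hρ h)
  · exact .inr (alternate_apply_of_not_isLeading hσ hρ h)

lemma alternate_symm_apply_of_isLeading (h : IsLeading σ ρ x) : (alternate hσ hρ).symm x = ρ x :=
  if_pos h

lemma alternate_symm_apply_of_not_isLeading (h : ¬ IsLeading σ ρ x) :
    (alternate hσ hρ).symm x = σ x :=
  if_neg h

lemma alternate_alternate_apply_of_isLeading (h : IsLeading σ ρ x) :
    alternate hσ hρ (alternate hσ hρ x) = ρ (σ x) := by
  rw [alternate_apply_of_isLeading hσ hρ h, alternate_apply_of_not_isLeading hσ hρ]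
  rwa [isLeading_left_apply_iff hσ hρ, not_not]

lemma alternate_alternate_apply_of_not_isLeading (h : ¬ IsLeading σ ρ x) :
    alternate hσ hρ (alternate hσ hρ x) = σ (ρ x) := by
  rw [alternate_apply_of_not_isLeading hσ hρ h, alternate_apply_of_isLeading hσ hρ]
  rwa [isLeading_right_apply_iff hσ hρ]

lemma sameCycle_alternate_sq_iff :
    (alternate hσ hρ * alternate hσ hρ).SameCycle x y ↔ (σ * ρ).SameCycle x y := by
  set τ := alternate hσ hρ
  have hτ (z : V) : (σ * ρ).SameCycle ((τ * τ) z) z := by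
    by_cases h : IsLeading σ ρ z
    · refine ⟨1, ?_⟩
      simp [τ, alternate_alternate_apply_of_isLeading hσ hρ h, hρ.involutive _, hσ.involutive _]
    · refine Perm.SameCycle.symm ⟨1, ?_⟩
      simp [τ, alternate_alternate_apply_of_not_isLeading hσ hρ h]
  have hπ (z : V) : (τ * τ).SameCycle ((σ * ρ) z) z := by
    by_cases h : IsLeading σ ρ z
    · have hlead : IsLeading σ ρ (σ (ρ z)) := by
        rwa [isLeading_left_apply_iff hσ hρ, isLeading_right_apply_iff hσ hρ, not_not]
      refine ⟨1, ?_⟩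
      simp [τ, alternate_alternate_apply_of_isLeading hσ hρ hlead, hρ.involutive _,
        hσ.involutive _]
    · refine Perm.SameCycle.symm ⟨1, ?_⟩
      simp [τ, alternate_alternate_apply_of_not_isLeading hσ hρ h]
  exact ⟨sameCycle_of_forall_sameCycle_apply hτ, sameCycle_of_forall_sameCycle_apply hπ⟩

lemma isLeading_iff_cyclePrecedes_alternate :
    IsLeading σ ρ x ↔
      CyclePrecedes (alternate hσ hρ * alternate hσ hρ) x (alternate hσ hρ x) := by
  have hx : (σ * ρ).SameCycle (σ x) (alternate hσ hρ x) := by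
    rcases alternate_apply_eq_or hσ hρ x with h | h <;> rw [h]
    · exact (sameCycle_mul_right_apply hρ.involutive x).symm
  rw [IsLeading, cyclePrecedes_congr (.refl _ x) hx]
  simp only [CyclePrecedes, sameCycle_alternate_sq_iff]

lemma alternate_injective {σ' ρ' : Perm V} (hσ' : IsPairing σ') (hρ' : IsPairing ρ')
    (h : alternate hσ hρ = alternate hσ' hρ') : σ = σ' ∧ ρ = ρ' := by
  have hlead (x : V) : IsLeading σ ρ x ↔ IsLeading σ' ρ' x := by
    rw [isLeading_iff_cyclePrecedes_alternate hσ hρ, h, isLeading_iff_cyclePrecedes_alternate]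
  have happly (x : V) := Equiv.congr_fun h x
  have hsymm (x : V) := Equiv.congr_fun (congrArg Equiv.symm h) x
  refine ⟨Equiv.ext fun x ↦ ?_, Equiv.ext fun x ↦ ?_⟩ <;> by_cases hx : IsLeading σ ρ x
  · rw [← alternate_apply_of_isLeading hσ hρ hx, happly,
      alternate_apply_of_isLeading hσ' hρ' ((hlead x).1 hx)]
  · rw [← alternate_symm_apply_of_not_isLeading hσ hρ hx, hsymm,
      alternate_symm_apply_of_not_isLeading hσ' hρ' (mt (hlead x).2 hx)]
  · rw [← alternate_symm_apply_of_isLeading hσ hρ hx, hsymm,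
      alternate_symm_apply_of_isLeading hσ' hρ' ((hlead x).1 hx)]
  · rw [← alternate_apply_of_not_isLeading hσ hρ hx, happly,
      alternate_apply_of_not_isLeading hσ' hρ' (mt (hlead x).2 hx)]

end Pairings

section PerfectMatchings

open Equiv Finset

variable {V : Type*} {G : SimpleGraph V}

/-- The permutation sending every vertex to the other end of its edge in a perfect matching. -/
noncomputable def partner {M : G.Subgraph} (hM : M.IsPerfectMatching) : Perm V :=
  have hpartner (v : V) := SimpleGraph.Subgraph.isPerfectMatching_iff.1 hM v
  Function.Involutive.toPerm (fun v ↦ (hpartner v).choose) fun v ↦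
    ((hpartner _).choose_spec.2 v (hpartner v).choose_spec.1.symm).symm

lemma adj_iff_partner_eq {M : G.Subgraph} (hM : M.IsPerfectMatching) {v w : V} :
    M.Adj v w ↔ partner hM v = w := by
  have hv := (SimpleGraph.Subgraph.isPerfectMatching_iff.1 hM v).choose_spec
  exact ⟨fun h ↦ (hv.2 w h).symm, fun h ↦ h ▸ hv.1⟩

lemma adj_partner {M : G.Subgraph} (hM : M.IsPerfectMatching) (v : V) : G.Adj v (partner hM v) :=
  ((adj_iff_partner_eq hM).2 rfl).adj_sub

lemma isPairing_partner {M : G.Subgraph} (hM : M.IsPerfectMatching) : IsPairing (partner hM) where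
  involutive _ := (adj_iff_partner_eq hM).1 ((adj_iff_partner_eq hM).2 rfl).symm
  apply_ne v := (adj_partner hM v).ne'

lemma eq_of_partner_eq {M N : G.Subgraph} (hM : M.IsPerfectMatching) (hN : N.IsPerfectMatching)
    (h : partner hM = partner hN) : M = N := by
  refine SimpleGraph.Subgraph.ext ?_ ?_
  · rw [hM.2.verts_eq_univ, hN.2.verts_eq_univ]
  · ext v w
    rw [adj_iff_partner_eq hM, adj_iff_partner_eq hN, h]

lemma adj_alternate_partner {M N : G.Subgraph} (hM : M.IsPerfectMatching)
    (hN : N.IsPerfectMatching) (v : V) :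
    G.Adj v (alternate (isPairing_partner hM) (isPairing_partner hN) v) := by
  rcases alternate_apply_eq_or (isPairing_partner hM) (isPairing_partner hN) v with h | h
  · exact h ▸ adj_partner hM v
  · exact h ▸ adj_partner hN v

lemma sq_perfmat_le_card_perm [Finite V] (G : SimpleGraph V) :
    perfmat G ^ 2 ≤ Nat.card {τ : Perm V // ∀ v, G.Adj v (τ v)} := by
  rw [perfmat, ← Nat.card_coe_set_eq, sq, ← Nat.card_prod]
  refine Nat.card_le_card_of_injective
    (fun ⟨⟨_, hM⟩, ⟨_, hN⟩⟩ ↦ ⟨_, adj_alternate_partner hM hN⟩) ?_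
  rintro ⟨⟨M, hM⟩, ⟨N, hN⟩⟩ ⟨⟨M', hM'⟩, ⟨N', hN'⟩⟩ h
  obtain ⟨hMM', hNN'⟩ := alternate_injective (isPairing_partner hM) (isPairing_partner hN)
    (isPairing_partner hM') (isPairing_partner hN') (congrArg Subtype.val h)
  simp only [eq_of_partner_eq hM hM' hMM', eq_of_partner_eq hN hN' hNN']

variable [Fintype V] [DecidableRel G.Adj]

/-- The **Kahn–Lovász theorem**. -/
theorem sq_perfmat_le_prod_factorialRoot_degree :
    (perfmat G : ℝ) ^ 2 ≤ ∏ v, factorialRoot (G.degree v) := by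
  classical
  have hcard : Nat.card {τ : Perm V // ∀ v, G.Adj v (τ v)} =
      #(bijectionsInto fun v ↦ G.neighborFinset v) := by
    rw [Nat.card_eq_fintype_card, Fintype.card_subtype, bijectionsInto]
    simp only [SimpleGraph.mem_neighborFinset]
  calc (perfmat G : ℝ) ^ 2 ≤ #(bijectionsInto fun v ↦ G.neighborFinset v) := by
        rw [← hcard]
        exact mod_cast sq_perfmat_le_card_perm G
    _ ≤ ∏ v, factorialRoot (G.degree v) := card_bijectionsInto_le_prod_factorialRoot _

lemma one_le_degree_of_perfmat_pos (h : 0 < perfmat G) (v : V) : 1 ≤ G.degree v := by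
  obtain ⟨M, hM⟩ := Set.nonempty_of_ncard_ne_zero h.ne'
  exact (G.degree_pos_iff_exists_adj v).2 ⟨partner hM v, adj_partner hM v⟩

end PerfectMatchings

/-- A simple graph with `2n` vertices and `m` edges, `n ≤ m ≤ C(2n,2)`, has at most
`ω(2n,m)` perfect matchings. -/
theorem stmt_6 {V : Type*} [Fintype V] (G : SimpleGraph V) (n m : ℕ) (hn : 0 < n)
    (hnm : n ≤ m) (hm : m ≤ (2 * n).choose 2) (hV : Fintype.card V = 2 * n)
    (hE : G.edgeSet.ncard = m) :
    (perfmat G : ℝ) ≤ omega2 n m := by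
  classical
  rcases (perfmat G).eq_zero_or_pos with hzero | hpos
  · rw [hzero, Nat.cast_zero]
    exact (omega2_pos n m).le
  have hposR : (0 : ℝ) < perfmat G := mod_cast hpos
  have hdeg : ∑ v, G.degree v = 2 * m := by
    rw [G.sum_degrees_eq_twice_card_edges, ← hE, ← G.coe_edgeFinset, Set.ncard_coe_finset]
  have hKahnLovasz : 2 * Real.log (perfmat G) ≤ ∑ v, Real.log (factorialRoot (G.degree v)) := by
    rw [← Real.log_prod fun v _ ↦ (factorialRoot_pos _).ne']
    simpa using Real.log_le_log (pow_pos hposR 2) sq_perfmat_le_prod_factorialRoot_degree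
  have hbalance := sum_log_factorialRoot_le Finset.univ
    (fun v _ ↦ one_le_degree_of_perfmat_pos hpos v) ((Nat.one_le_div_iff hn).2 hnm)
  rw [hdeg, Finset.card_univ, hV] at hbalance
  push_cast at hbalance
  rw [← Real.log_le_log_iff hposR (omega2_pos n m), log_omega2 hn]
  linarith
end

section
/- Let G be a finite simple bipartite graph with an even number 2n of vertices and m edges. Then there exists a balanced finite simple bipartite graph G_0 with 2n vertices and m edges such that the number of perfect matchings of G is at most the number of perfect matchings of G_0. -/
open Nat

/-- The degree of a vertex, as the cardinality of its neighbor set. -/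
noncomputable def ndeg {V : Type*} (G : SimpleGraph V) (v : V) : ℕ :=
  (G.neighborSet v).ncard

/-- A graph is unbalanced if there are vertices `u, v` with `deg v ≥ deg u + 2` such that
every neighbor of `u` different from `v` is a neighbor of `v`; it is balanced otherwise. -/
def BalancedGraph {V : Type*} (G : SimpleGraph V) : Prop :=
  ¬ ∃ u v : V, ndeg G u + 2 ≤ ndeg G v ∧ ∀ w, G.Adj u w → w ≠ v → G.Adj v w

/-- A graph is bipartite if its vertex set splits into two parts with all edges going
between the parts. -/
def IsBipartite {V : Type*} (G : SimpleGraph V) : Prop :=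
  ∃ s : Set V, ∀ ⦃u v : V⦄, G.Adj u v → (u ∈ s ↔ v ∉ s)

/-!
Among the bipartite graphs with a given number of edges take one that maximizes the number of
perfect matchings and, subject to that, minimizes the sum of the squared degrees. Suppose that it
has a perfect matching but is unbalanced, witnessed by `u` and `v`. If `u` and `v` lie in the same
part, moving an edge from `v` to `u` loses no perfect matching, since the matchings that used it can
be reflected by the transposition of `u` and `v`, and it lowers the sum of squares. If they lie in
different parts, then `v` is the only neighbor of `u`; every perfect matching uses `uv`, so another
edge at `v` is useless and can be replaced by one that closes an alternating 4-cycle through `uv`.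
If no bipartite graph with this number of edges has a perfect matching, then the number is so small
that a partial matching of a complete bipartite graph will do.
-/

section

open SimpleGraph (edge edge_adj)

variable {V : Type*} {G H K B : SimpleGraph V} {s : Set V} {a b u v w y : V}

/-- The perfect matchings of `G`, encoded as the involutions that move every vertex along an
edge of `G`. -/
def edgeInvolutions (G : SimpleGraph V) : Set (V → V) :=
  {f | f.Involutive ∧ ∀ v, G.Adj v (f v)}

theorem edgeInvolutions_mono (h : G ≤ H) : edgeInvolutions G ⊆ edgeInvolutions H :=
  fun _ hf ↦ ⟨hf.1, fun v ↦ h (hf.2 v)⟩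

theorem perfmat_eq_ncard_edgeInvolutions (G : SimpleGraph V) :
    perfmat G = (edgeInvolutions G).ncard := by
  symm
  refine Set.ncard_congr
    (fun f hf ↦ { verts := Set.univ
                  Adj := fun a b ↦ f a = b
                  adj_sub := fun {a b} h ↦ h ▸ hf.2 a
                  edge_vert := fun _ ↦ trivial
                  symm := ⟨fun a b h ↦ h ▸ hf.1 a⟩ }) ?_ ?_ ?_
  · exact fun f hf ↦ SimpleGraph.Subgraph.isPerfectMatching_iff.2
      fun a ↦ ⟨f a, rfl, fun _ ↦ Eq.symm⟩
  · intro f g hf hg h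
    funext a
    have hadj : (f a = f a) = (g a = f a) := congrArg (fun M : G.Subgraph ↦ M.Adj a (f a)) h
    exact (hadj.mp rfl).symm
  · intro M hM
    choose f hf huniq using SimpleGraph.Subgraph.isPerfectMatching_iff.1 hM
    refine ⟨f, ⟨fun a ↦ (huniq _ _ (hf a).symm).symm, fun a ↦ M.adj_sub (hf a)⟩, ?_⟩
    ext a b
    · simpa using hM.2 a
    · exact ⟨fun h ↦ h ▸ hf a, fun h ↦ (huniq _ _ h).symm⟩

theorem perfmat_pos_iff_nonempty_edgeInvolutions [Finite V] :
    0 < perfmat G ↔ (edgeInvolutions G).Nonempty := by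
  rw [perfmat_eq_ncard_edgeInvolutions, Set.ncard_pos (Set.toFinite _)]

theorem mem_edgeInvolutions_sup_edge_and_ne_iff {f : V → V} (hab : ¬ G.Adj a b) :
    f ∈ edgeInvolutions (G ⊔ edge a b) ∧ f a ≠ b ↔ f ∈ edgeInvolutions G := by
  constructor
  · rintro ⟨⟨hf, hadj⟩, hne⟩
    refine ⟨hf, fun x ↦ (hadj x).resolve_right fun hx ↦ hne ?_⟩
    rcases ((edge_adj ..).1 hx).1 with ⟨rfl, h⟩ | ⟨rfl, h⟩
    exacts [h, h ▸ hf x]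
  · exact fun hf ↦ ⟨edgeInvolutions_mono le_sup_left hf, fun h ↦ hab (h ▸ hf.2 a)⟩

theorem perfmat_sup_edge [Finite V] (hab : ¬ G.Adj a b) :
    perfmat (G ⊔ edge a b) =
      perfmat G + {f ∈ edgeInvolutions (G ⊔ edge a b) | f a = b}.ncard := by
  have hdiff : edgeInvolutions (G ⊔ edge a b) \ {f | f a = b} = edgeInvolutions G :=
    Set.ext fun _ ↦ mem_edgeInvolutions_sup_edge_and_ne_iff hab
  rw [perfmat_eq_ncard_edgeInvolutions, perfmat_eq_ncard_edgeInvolutions, ← hdiff, add_comm]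
  exact (Set.ncard_inter_add_ncard_sdiff_eq_ncard _ _ (Set.toFinite _)).symm

theorem conj_mem_edgeInvolutions {f : V → V} (σ : Equiv.Perm V) (hf : f.Involutive)
    (hadj : ∀ x, H.Adj (σ x) (σ (f x))) : σ.conj f ∈ edgeInvolutions H :=
  ⟨fun x ↦ by simp [Equiv.conj_apply, hf (σ.symm x)],
    fun x ↦ by simpa [Equiv.conj_apply] using hadj (σ.symm x)⟩

theorem perfmat_sup_edge_le_perfmat_sup_edge [Finite V]
    (hnb : ∀ x, K.Adj u x → x ≠ v → K.Adj v x) (hvw : ¬ K.Adj v w) (huw : ¬ K.Adj u w)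
    (huv : u ≠ v) (hwu : w ≠ u) : perfmat (K ⊔ edge v w) ≤ perfmat (K ⊔ edge u w) := by
  classical
  rw [perfmat_sup_edge hvw, perfmat_sup_edge huw]
  refine Nat.add_le_add_left (Set.ncard_le_ncard_of_injOn (Equiv.swap u v).conj ?_
    (Equiv.injective _).injOn (Set.toFinite _)) _
  rintro f ⟨⟨hinv, hf⟩, hfv⟩
  have hwv : w ≠ v := hfv ▸ (hf v).ne'
  have hK : ∀ x, x ≠ v → x ≠ w → K.Adj x (f x) := by
    intro x hxv hxw
    simpa [edge_adj, hxv, hxw] using hf x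
  have hvfu : K.Adj v (f u) :=
    hnb (f u) (hK u huv hwu.symm) fun h ↦ hwu (by rw [← hfv, ← h, hinv u])
  refine ⟨conj_mem_edgeInvolutions _ hinv fun x ↦ ?_, ?_⟩
  · have hinvx := hinv x
    have hx := (hf x).ne
    simp only [SimpleGraph.sup_adj, edge_adj, Equiv.swap_apply_def]
    grind [SimpleGraph.adj_comm]
  · simp [Equiv.conj_apply, hfv, Equiv.swap_apply_of_ne_of_ne hwu hwv]

/-- Flipping the alternating 4-cycle `u, f u, w, f w` gives a matching through the new edge. -/
theorem perfmat_lt_perfmat_sup_edge [Finite V] {f : V → V} (hf : f ∈ edgeInvolutions G)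
    (hadj : G.Adj (f u) w) (hnadj : ¬ G.Adj u (f w)) :
    perfmat G < perfmat (G ⊔ edge u (f w)) := by
  classical
  rw [perfmat_sup_edge hnadj, Nat.lt_add_right_iff_pos, Set.ncard_pos (Set.toFinite _)]
  obtain ⟨hinv, hG⟩ := hf
  have hu : u ≠ f u := (hG u).ne
  have hne : u ≠ f w := by
    rintro rfl
    exact hadj.ne (hinv w)
  refine ⟨(Equiv.swap (f u) (f w)).conj f, conj_mem_edgeInvolutions _ hinv fun x ↦ ?_, ?_⟩
  · have hx := hG x
    have hne' := hx.ne
    have hinvx := hinv x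
    have hinvu := hinv u
    have hinvw := hinv w
    simp only [SimpleGraph.sup_adj, edge_adj, Equiv.swap_apply_def]
    grind [SimpleGraph.adj_comm]
  · simp [Equiv.conj_apply, Equiv.swap_apply_of_ne_of_ne hu hne]

theorem apply_eq_of_forall_adj_eq {f : V → V} (hf : f ∈ edgeInvolutions G)
    (hu : ∀ x, G.Adj u x → x = v) : f u = v ∧ f v = u := by
  have hfu : f u = v := hu _ (hf.2 u)
  exact ⟨hfu, hfu ▸ hf.1 u⟩

theorem perfmat_sup_edge_of_forall_adj_eq [Finite V] (hu : ∀ x, K.Adj u x → x = v)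
    (hyu : y ≠ u) (huv : u ≠ v) (hvy : ¬ K.Adj v y) : perfmat (K ⊔ edge v y) = perfmat K := by
  have hu' : ∀ x, (K ⊔ edge v y).Adj u x → x = v := by
    simpa [edge_adj, huv, hyu.symm] using hu
  rw [perfmat_sup_edge hvy, Nat.add_eq_left, Set.ncard_eq_zero (Set.toFinite _)]
  refine Set.eq_empty_of_forall_notMem fun f ⟨hf, hfv⟩ ↦ hyu ?_
  rw [← hfv, (apply_eq_of_forall_adj_eq hf hu').2]

/-- The sum of the squared degrees, which measures how unevenly the degrees are distributed. -/
noncomputable def sumSqDeg [Fintype V] (G : SimpleGraph V) : ℕ :=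
  ∑ x, ndeg G x ^ 2

open Classical in
theorem ndeg_sup_edge [Finite V] (hne : a ≠ b) (hab : ¬ G.Adj a b) (x : V) :
    ndeg (G ⊔ edge a b) x = ndeg G x + ((if x = a then 1 else 0) + if x = b then 1 else 0) := by
  have hdisj : Disjoint (G.neighborSet x) ((edge a b).neighborSet x) := by
    rw [Set.disjoint_left]
    simp only [SimpleGraph.mem_neighborSet, edge_adj]
    grind [SimpleGraph.adj_comm]
  have hedge : (edge a b).neighborSet x =
      if x = a then {b} else if x = b then {a} else ∅ := by
    ext z
    simp only [SimpleGraph.mem_neighborSet, edge_adj]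
    grind
  have hsup : (G ⊔ edge a b).neighborSet x = G.neighborSet x ∪ (edge a b).neighborSet x := rfl
  rw [ndeg, ndeg, hsup, Set.ncard_union_eq hdisj, hedge]
  split_ifs <;> simp_all

theorem sumSqDeg_sup_edge [Fintype V] (hne : a ≠ b) (hab : ¬ G.Adj a b) :
    sumSqDeg (G ⊔ edge a b) = sumSqDeg G + 2 * (ndeg G a + ndeg G b + 1) := by
  classical
  have hterm : ∀ x, ndeg (G ⊔ edge a b) x ^ 2 = ndeg G x ^ 2 +
      ((if x = a then 2 * ndeg G x + 1 else 0) + if x = b then 2 * ndeg G x + 1 else 0) := by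
    intro x
    rw [ndeg_sup_edge hne hab]
    split_ifs
    · simp_all
    all_goals ring
  simp only [sumSqDeg, hterm, Finset.sum_add_distrib, Finset.sum_ite_eq', Finset.mem_univ, if_true]
  ring

theorem ncard_edgeSet_sup_edge [Finite V] (hne : a ≠ b) (hab : ¬ G.Adj a b) :
    (G ⊔ edge a b).edgeSet.ncard = G.edgeSet.ncard + 1 := by
  rw [SimpleGraph.edgeSet_sup, SimpleGraph.edgeSet_edge_of_ne hne, Set.union_singleton,
    Set.ncard_insert_of_notMem (by simpa using hab)]

theorem exists_sup_edge_eq (hab : G.Adj a b) : ∃ K, ¬ K.Adj a b ∧ K ⊔ edge a b = G :=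
  ⟨G \ edge a b, by simp [edge_adj, hab.ne],
    sdiff_sup_cancel ((SimpleGraph.edge_le_iff _).2 (.inr hab))⟩

/-- The complete bipartite graph with parts `s` and `sᶜ`; `G` is bipartite exactly if it is a
subgraph of such a graph. -/
def cutGraph (s : Set V) : SimpleGraph V where
  Adj u v := u ∈ s ↔ v ∉ s
  symm := ⟨fun _ _ h ↦ by tauto⟩
  loopless := ⟨fun _ h ↦ by tauto⟩

theorem IsBipartite.mono (hGH : G ≤ H) : IsBipartite H → IsBipartite G :=
  fun ⟨s, hs⟩ ↦ ⟨s, fun _ _ h ↦ hs (hGH h)⟩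

/-- The quantity maximized over the bipartite graphs with a given number of edges: first the number
of perfect matchings, then, with the order reversed, the unevenness of the degrees. -/
noncomputable def matchingRank [Fintype V] (G : SimpleGraph V) : ℕ ×ₗ ℕᵒᵈ :=
  toLex (perfmat G, OrderDual.toDual (sumSqDeg G))

theorem perfmat_le_of_matchingRank_le [Fintype V] (h : matchingRank G ≤ matchingRank H) :
    perfmat G ≤ perfmat H :=
  Prod.Lex.monotone_fst _ _ h

theorem exists_adj_not_adj_of_ndeg_add_two_le [Finite V] (hdeg : ndeg G u + 2 ≤ ndeg G v) :
    ∃ w ≠ u, G.Adj v w ∧ ¬ G.Adj u w := by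
  have hlt : (insert u (G.neighborSet u)).ncard < (G.neighborSet v).ncard :=
    (Set.ncard_insert_le _ _).trans_lt (by unfold ndeg at hdeg; omega)
  obtain ⟨w, hvw, hw⟩ := Set.exists_mem_notMem_of_ncard_lt_ncard hlt
  simp only [Set.mem_insert_iff, not_or] at hw
  exact ⟨w, hw.1, hvw, hw.2⟩

theorem sup_edge_le_cutGraph (hK : K ≤ cutGraph s) (hab : a ∈ s ↔ b ∉ s) :
    K ⊔ edge a b ≤ cutGraph s :=
  sup_le hK ((SimpleGraph.edge_le_iff _).2 (.inr hab))

theorem exists_matchingRank_lt_of_mem_iff_mem [Fintype V] (hG : G ≤ cutGraph s)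
    (huv : u ∈ s ↔ v ∈ s) (hdeg : ndeg G u + 2 ≤ ndeg G v)
    (hnb : ∀ x, G.Adj u x → x ≠ v → G.Adj v x) :
    ∃ H ≤ cutGraph s, H.edgeSet.ncard = G.edgeSet.ncard ∧ matchingRank G < matchingRank H := by
  obtain ⟨w, hwu, hvw, huw⟩ := exists_adj_not_adj_of_ndeg_add_two_le hdeg
  have hvw_cut : v ∈ s ↔ w ∉ s := hG hvw
  have hne : v ≠ w := hvw.ne
  have huv_ne : u ≠ v := by
    rintro rfl
    omega
  obtain ⟨K, hKvw, rfl⟩ := exists_sup_edge_eq hvw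
  have hKuw : ¬ K.Adj u w := fun h ↦ huw (.inl h)
  have hKnb : ∀ x, K.Adj u x → x ≠ v → K.Adj v x := by
    intro x hux hxv
    have hxw : x ≠ w := fun h ↦ hKuw (h ▸ hux)
    simpa [edge_adj, hxw, hxv] using hnb x (.inl hux) hxv
  have hKdeg : ndeg K u < ndeg K v := by
    simp only [ndeg_sup_edge hne hKvw, huv_ne, hwu.symm, hne, if_true, if_false] at hdeg
    omega
  refine ⟨K ⊔ edge u w, sup_edge_le_cutGraph (le_sup_left.trans hG) (huv.trans hvw_cut), ?_,
    Prod.Lex.toLex_lt_toLex'.2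
      ⟨perfmat_sup_edge_le_perfmat_sup_edge hKnb hKvw hKuw huv_ne hwu, fun _ ↦ ?_⟩⟩
  · rw [ncard_edgeSet_sup_edge hwu.symm hKuw, ncard_edgeSet_sup_edge hne hKvw]
  · rw [OrderDual.toDual_lt_toDual, sumSqDeg_sup_edge hwu.symm hKuw, sumSqDeg_sup_edge hne hKvw]
    omega

theorem exists_adj_adj_ne_of_two_lt_ndeg [Finite V] (hdeg : 2 < ndeg G v) (u : V) :
    ∃ w y, G.Adj v w ∧ G.Adj v y ∧ w ≠ u ∧ y ≠ u ∧ w ≠ y := by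
  obtain ⟨w, hvw, hwu⟩ := Set.exists_ne_of_one_lt_ncard (one_lt_two.trans hdeg) u
  obtain ⟨y, hvy, hy⟩ := Set.exists_mem_notMem_of_ncard_lt_ncard
    ((Set.ncard_pair hwu).trans_lt hdeg)
  simp only [Set.mem_insert_iff, Set.mem_singleton_iff, not_or] at hy
  exact ⟨w, y, hvw, hvy, hwu, hy.2, Ne.symm hy.1⟩

theorem exists_perfmat_lt_of_forall_adj_eq [Finite V] (hG : G ≤ cutGraph s)
    (hpos : 0 < perfmat G) (hu : ∀ x, G.Adj u x → x = v) (hdeg : ndeg G u + 2 ≤ ndeg G v) :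
    ∃ H ≤ cutGraph s, H.edgeSet.ncard = G.edgeSet.ncard ∧ perfmat G < perfmat H := by
  obtain ⟨f, hf⟩ := perfmat_pos_iff_nonempty_edgeInvolutions.1 hpos
  obtain ⟨hfu, hfv⟩ := apply_eq_of_forall_adj_eq hf hu
  have hdeg_u : 1 ≤ ndeg G u := (Set.ncard_pos (Set.toFinite _)).2 ⟨f u, hf.2 u⟩
  have hdeg_v : 2 < ndeg G v := by omega
  obtain ⟨w, y, hvw, hvy, hwu, hyu, hwy⟩ := exists_adj_adj_ne_of_two_lt_ndeg hdeg_v u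
  have huv : u ≠ v := hfu ▸ (hf.2 u).ne
  have hfw : f w ≠ v := fun h ↦ hwu (by rw [← hf.1 w, h, hfv])
  have hufw : u ≠ f w := fun h ↦ hvw.ne (by rw [← hfu, h, hf.1 w])
  have hcut : u ∈ s ↔ f w ∉ s := by
    have huv_cut : u ∈ s ↔ f u ∉ s := hG (hf.2 u)
    have hvw_cut : v ∈ s ↔ w ∉ s := hG hvw
    have hfw_cut : w ∈ s ↔ f w ∉ s := hG (hf.2 w)
    rw [hfu] at huv_cut
    tauto
  have hne : v ≠ y := hvy.ne
  obtain ⟨K, hKvy, rfl⟩ := exists_sup_edge_eq hvy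
  have hKu : ∀ x, K.Adj u x → x = v := fun x h ↦ hu x (.inl h)
  have hKfw : ¬ K.Adj u (f w) := fun h ↦ hfw (hKu _ h)
  have hKvw : K.Adj (f u) w := by simpa [edge_adj, hwy, hne, hfu] using hvw
  have hKf : f ∈ edgeInvolutions K :=
    (mem_edgeInvolutions_sup_edge_and_ne_iff hKvy).1 ⟨hf, hfv ▸ hyu.symm⟩
  refine ⟨K ⊔ edge u (f w), sup_edge_le_cutGraph (le_sup_left.trans hG) hcut, ?_, ?_⟩
  · rw [ncard_edgeSet_sup_edge hufw hKfw, ncard_edgeSet_sup_edge hne hKvy]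
  · rw [perfmat_sup_edge_of_forall_adj_eq hKu hyu huv hKvy]
    exact perfmat_lt_perfmat_sup_edge hKf hKvw hKfw

theorem exists_matchingRank_lt_of_mem_iff_notMem [Fintype V] (hG : G ≤ cutGraph s)
    (hpos : 0 < perfmat G) (huv : u ∈ s ↔ v ∉ s) (hdeg : ndeg G u + 2 ≤ ndeg G v)
    (hnb : ∀ x, G.Adj u x → x ≠ v → G.Adj v x) :
    ∃ H ≤ cutGraph s, H.edgeSet.ncard = G.edgeSet.ncard ∧ matchingRank G < matchingRank H := by
  have hu : ∀ x, G.Adj u x → x = v := by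
    intro x hux
    by_contra hxv
    have hux_cut : u ∈ s ↔ x ∉ s := hG hux
    have hvx_cut : v ∈ s ↔ x ∉ s := hG (hnb x hux hxv)
    tauto
  obtain ⟨H, hH, hcard, hlt⟩ := exists_perfmat_lt_of_forall_adj_eq hG hpos hu hdeg
  exact ⟨H, hH, hcard, Prod.Lex.toLex_lt_toLex.2 (.inl hlt)⟩

theorem exists_balancedGraph_perfmat_le [Finite V] (hG : IsBipartite G) (hpos : 0 < perfmat G) :
    ∃ G₀ : SimpleGraph V, BalancedGraph G₀ ∧ IsBipartite G₀ ∧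
      G₀.edgeSet.ncard = G.edgeSet.ncard ∧ perfmat G ≤ perfmat G₀ := by
  have := Fintype.ofFinite V
  obtain ⟨G₀, ⟨⟨s, hs⟩, hcard⟩, hmax⟩ := Set.exists_max_image
    {H : SimpleGraph V | IsBipartite H ∧ H.edgeSet.ncard = G.edgeSet.ncard} matchingRank
    (Set.toFinite _) ⟨G, hG, rfl⟩
  have hle : perfmat G ≤ perfmat G₀ := perfmat_le_of_matchingRank_le (hmax G ⟨hG, rfl⟩)
  refine ⟨G₀, fun ⟨u, v, hdeg, hnb⟩ ↦ ?_, ⟨s, hs⟩, hcard, hle⟩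
  obtain ⟨H, hH, hHcard, hlt⟩ : ∃ H ≤ cutGraph s,
      H.edgeSet.ncard = G₀.edgeSet.ncard ∧ matchingRank G₀ < matchingRank H := by
    by_cases huv : u ∈ s ↔ v ∈ s
    · exact exists_matchingRank_lt_of_mem_iff_mem hs huv hdeg hnb
    · exact exists_matchingRank_lt_of_mem_iff_notMem hs (hpos.trans_le hle) (by tauto) hdeg hnb
  exact (hmax H ⟨⟨s, hH⟩, hHcard.trans hcard⟩).not_gt hlt

theorem exists_between_ncard_edgeSet_eq {P : SimpleGraph V} {m : ℕ} (hPB : P ≤ B)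
    (hP : P.edgeSet.ncard ≤ m) (hB : m ≤ B.edgeSet.ncard) :
    ∃ H, P ≤ H ∧ H ≤ B ∧ H.edgeSet.ncard = m := by
  obtain ⟨E, hPE, hEB, rfl⟩ :=
    Set.exists_subsuperset_card_eq (SimpleGraph.edgeSet_mono hPB) hP hB
  have hE : (SimpleGraph.fromEdgeSet E).edgeSet = E := by
    rw [SimpleGraph.edgeSet_fromEdgeSet, sdiff_eq_left, Set.disjoint_left]
    exact fun e he ↦ B.not_isDiag_of_mem_edgeSet (hEB he)
  refine ⟨SimpleGraph.fromEdgeSet E, ?_, ?_, by rw [hE]⟩ <;>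
    rwa [← SimpleGraph.edgeSet_subset_edgeSet, hE]

theorem balancedGraph_of_le_spanningCoe [Finite V] {M : B.Subgraph} (hM : M.IsPerfectMatching)
    (hH : H ≤ M.spanningCoe) : BalancedGraph H := by
  rintro ⟨u, v, hdeg, -⟩
  have hv : ndeg H v ≤ 1 := (Set.ncard_le_one (Set.toFinite _)).2 fun a ha b hb ↦
    (SimpleGraph.Subgraph.isPerfectMatching_iff.1 hM v).unique (hH ha) (hH hb)
  omega

theorem exists_le_balancedGraph_or_perfmat_pos [Finite V] {m : ℕ} (hB : 0 < perfmat B)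
    (hm : m ≤ B.edgeSet.ncard) :
    ∃ H ≤ B, H.edgeSet.ncard = m ∧ (BalancedGraph H ∨ 0 < perfmat H) := by
  obtain ⟨M, hM⟩ := (Set.ncard_pos (Set.toFinite _)).1 hB
  rcases le_total m M.spanningCoe.edgeSet.ncard with h | h
  · obtain ⟨H, -, hH, hcard⟩ := exists_between_ncard_edgeSet_eq bot_le (by simp) h
    exact ⟨H, hH.trans M.spanningCoe_le, hcard, .inl (balancedGraph_of_le_spanningCoe hM hH)⟩
  · obtain ⟨H, hMH, hH, hcard⟩ := exists_between_ncard_edgeSet_eq M.spanningCoe_le h hm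
    exact ⟨H, hH, hcard, .inr ((Set.ncard_pos (Set.toFinite _)).2
      ⟨_, (SimpleGraph.Subgraph.IsPerfectMatching.toSubgraph_iff hMH).2 hM⟩)⟩

theorem exists_isBipartite_perfmat_pos [Fintype V] {n : ℕ} (hV : Fintype.card V = 2 * n) :
    ∃ B : SimpleGraph V, IsBipartite B ∧ 0 < perfmat B ∧ B.edgeSet.ncard = n * n := by
  let e : V ≃ Fin n ⊕ Fin n := Fintype.equivOfCardEq (by simp [hV, two_mul])
  let C := completeBipartiteGraph (Fin n) (Fin n)
  refine ⟨C.comap e, ⟨{x | (e x).isLeft}, fun a b h ↦ ?_⟩, ?_, ?_⟩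
  · rcases ha : e a with i | i <;> rcases hb : e b with j | j <;> simp_all [C]
  · refine perfmat_pos_iff_nonempty_edgeInvolutions.2
      ⟨fun x ↦ e.symm (e x).swap, fun x ↦ by simp, fun x ↦ ?_⟩
    rcases h : e x with i | i <;> simp [C, h]
  · have hC : C.edgeSet.ncard = n * n := by
      simp [C, Set.ncard_def, SimpleGraph.encard_edgeSet_completeBipartiteGraph]
    rw [← hC]
    exact Nat.card_congr (SimpleGraph.Iso.comap e C).mapEdgeSet

theorem IsBipartite.ncard_edgeSet_le [Fintype V] {n : ℕ} (hG : IsBipartite G)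
    (hV : Fintype.card V = 2 * n) : G.edgeSet.ncard ≤ n * n := by
  obtain ⟨s, hs⟩ := hG
  have hG' : G.IsBipartiteWith s sᶜ := by
    refine ⟨disjoint_compl_right, fun a b hab ↦ ?_⟩
    have hab_iff : a ∈ s ↔ b ∉ s := hs hab
    simp only [Set.mem_compl_iff]
    tauto
  have h := hG'.isBipartite.four_mul_encard_edgeSet_le
  rw [← (Set.toFinite G.edgeSet).cast_ncard_eq, ENat.card_eq_coe_fintype_card, hV] at h
  norm_cast at h
  nlinarith

end

/-- For every simple bipartite graph `G` with `2n` vertices and `m` edges there is a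
balanced simple bipartite graph `G₀` with `2n` vertices and `m` edges having at least as
many perfect matchings. -/
theorem stmt_9 {V : Type*} [Fintype V] (G : SimpleGraph V) (n m : ℕ)
    (hV : Fintype.card V = 2 * n) (hE : G.edgeSet.ncard = m) (hbip : IsBipartite G) :
    ∃ G0 : SimpleGraph V, BalancedGraph G0 ∧ IsBipartite G0 ∧ G0.edgeSet.ncard = m ∧
      perfmat G ≤ perfmat G0 := by
  subst hE
  by_cases hpos : 0 < perfmat G
  · exact exists_balancedGraph_perfmat_le hbip hpos
  obtain ⟨B, hB, hBpos, hBcard⟩ := exists_isBipartite_perfmat_pos hV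
  obtain ⟨H, hHB, hcard, hbal | hHpos⟩ := exists_le_balancedGraph_or_perfmat_pos hBpos
    ((hbip.ncard_edgeSet_le hV).trans_eq hBcard.symm)
  · exact ⟨H, hbal, hB.mono hHB, hcard, by omega⟩
  · obtain ⟨G₀, hbal, hG₀, hG₀card, -⟩ := exists_balancedGraph_perfmat_le (hB.mono hHB) hHpos
    exact ⟨G₀, hbal, hG₀, hG₀card.trans hcard, by omega⟩
end

section
/- Let n be a positive even integer and let B be an n×n matrix all of whose entries are 0 or 1. Then per(B) · per(J_n − B) = ((n/2)!)⁴ if and only if there exist permutation matrices P and Q such that P·B·Q equals the block-diagonal matrix J_{n/2} ⊕ J_{n/2} (the direct sum of two (n/2)×(n/2) all-ones blocks). -/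
open Nat Matrix

/-- The permanent of a square integer matrix. -/
def perm {n : ℕ} (M : Matrix (Fin n) (Fin n) ℤ) : ℤ :=
  ∑ σ : Equiv.Perm (Fin n), ∏ i, M i (σ i)

/-- The `n×n` all-ones matrix. -/
def Jmat (n : ℕ) : Matrix (Fin n) (Fin n) ℤ :=
  Matrix.of fun _ _ => 1

/-!
Count the perfect matchings of the rows `A i` and let the excess be the logarithm of their number
minus `∑ i, log (rᵢ!) / rᵢ`, where `rᵢ = #(A i)`. Average the excess of the minor at `(i, σ i)` over
all matchings `σ` and all rows `i`: the result is the excess of `A` plus nonnegative defects of the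
log-sum inequality. By induction on `A` the excess is nonpositive (Minc–Bregman). If the excess is
`0`, then all defects vanish and the excess of every such minor is `0` as well. The vanishing
defects make the numbers `1 / rᵢ` sum to `1` along each column. Comparing this column sum with the
same sum in a minor at the shortest row through the column shows that all rows through the column
coincide.

The function `log (r!) / r` is the sequence of running means of `log 1, log 2, …` and inherits its
strict concavity from the logarithm. Hence the Minc–Bregman bounds for `A` and its complement
multiply to at most `((n / 2)!) ^ 4`, with equality only if every row has size `n / 2`. In that case
rows that meet are equal and rows that do not meet are complementary, which leaves exactly two
blocks.
-/

open Finset Equiv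

section RunningMeans

variable {𝕜 : Type*} [Field 𝕜] [LinearOrder 𝕜] [IsStrictOrderedRing 𝕜]

theorem add_lt_two_mul_of_strictAnti_fwdDiff {f : ℕ → 𝕜} (hf : StrictAnti (fwdDiff 1 f))
    (a : ℕ) {t : ℕ} (ht : 0 < t) : f a + f (a + 2 * t) < 2 * f (a + t) := by
  have hsum (b : ℕ) : ∑ k ∈ range t, fwdDiff 1 f (b + k) = f (b + t) - f b :=
    Finset.sum_range_sub (fun k => f (b + k)) t
  have hlt : ∑ k ∈ range t, fwdDiff 1 f (a + t + k) < ∑ k ∈ range t, fwdDiff 1 f (a + k) :=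
    sum_lt_sum_of_nonempty (nonempty_range_iff.2 ht.ne') fun k _ => hf (by omega)
  rw [hsum, hsum, add_assoc, ← two_mul] at hlt
  linarith

theorem two_mul_sum_range_lt_of_strictAnti_fwdDiff {a : ℕ → 𝕜} (ha : StrictAnti (fwdDiff 1 a))
    (r : ℕ) : 2 * ∑ k ∈ range (r + 1), a k <
      (r + 1) * (r + 4) * a (r + 1) - (r + 1) * (r + 2) * a (r + 2) := by
  have hstep (k : ℕ) : a k + a (k + 2) < 2 * a (k + 1) := by
    simpa using add_lt_two_mul_of_strictAnti_fwdDiff ha k one_pos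
  induction r with
  | zero => have := hstep 0; norm_num at this ⊢; linarith
  | succ r ih =>
    have := mul_lt_mul_of_pos_left (hstep (r + 1)) (show (0 : 𝕜) < (r + 2) * (r + 3) by positivity)
    rw [sum_range_succ]
    push_cast
    linarith

theorem strictAnti_fwdDiff_mean {a : ℕ → 𝕜} (ha : StrictAnti (fwdDiff 1 a)) :
    StrictAnti (fwdDiff 1 fun r : ℕ => (∑ k ∈ range (r + 1), a k) / (r + 1 : ℕ)) := by
  refine strictAnti_nat_of_succ_lt fun r => ?_
  have h := two_mul_sum_range_lt_of_strictAnti_fwdDiff ha r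
  simp only [fwdDiff, sum_range_succ _ (r + 2), sum_range_succ _ (r + 1)]
  rw [← sub_pos]
  generalize ∑ k ∈ range (r + 1), a k = S at h ⊢
  have hfrac : (S + a (r + 1)) / (r + 1 + 1 : ℕ) - S / (r + 1 : ℕ) -
      ((S + a (r + 1) + a (r + 2)) / (r + 1 + 1 + 1 : ℕ) - (S + a (r + 1)) / (r + 1 + 1 : ℕ)) =
      ((r + 1) * (r + 4) * a (r + 1) - (r + 1) * (r + 2) * a (r + 2) - 2 * S) /
        ((r + 1) * (r + 2) * (r + 3)) := by
    push_cast
    field_simp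
    ring
  rw [hfrac]
  exact div_pos (sub_pos.2 h) (by positivity)

end RunningMeans

section MincLog

/-- The logarithm of the Minc–Bregman factor `(r!) ^ (1 / r)`; it is `0` at `r = 0`. -/
noncomputable def mincLog (r : ℕ) : ℝ := Real.log r ! / r

theorem mincLog_one : mincLog 1 = 0 := by simp [mincLog]

theorem mul_mincLog (r : ℕ) : r * mincLog r = Real.log r ! := by
  rcases eq_or_ne r 0 with rfl | hr
  · simp
  · exact mul_div_cancel₀ _ (Nat.cast_ne_zero.2 hr)

theorem succ_mul_mincLog_succ (r : ℕ) :
    (r + 1 : ℕ) * mincLog (r + 1) = Real.log (r + 1 : ℕ) + r * mincLog r := by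
  rw [mul_mincLog, mul_mincLog, Nat.factorial_succ, Nat.cast_mul,
    Real.log_mul (by positivity) (by positivity)]

theorem strictAnti_fwdDiff_log_add_one :
    StrictAnti (fwdDiff 1 fun k : ℕ => Real.log (k + 1 : ℕ)) := by
  refine strictAnti_nat_of_succ_lt fun k => ?_
  simp only [fwdDiff]
  rw [← Real.log_div (by positivity) (by positivity),
    ← Real.log_div (by positivity) (by positivity)]
  refine Real.log_lt_log (by positivity) ?_
  rw [div_lt_div_iff₀ (by positivity) (by positivity)]
  norm_cast
  nlinarith

theorem mincLog_eq_mean (r : ℕ) : mincLog r = (∑ k ∈ range r, Real.log (k + 1 : ℕ)) / r := by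
  rw [mincLog, ← prod_range_add_one_eq_factorial, Nat.cast_prod, Real.log_prod]
  exact fun k _ => by positivity

theorem strictAnti_fwdDiff_mincLog : StrictAnti (fwdDiff 1 fun r => mincLog (r + 1)) := by
  simpa only [mincLog_eq_mean] using strictAnti_fwdDiff_mean strictAnti_fwdDiff_log_add_one

theorem mincLog_add_mincLog_lt {a b m : ℕ} (ha : 0 < a) (hb : 0 < b) (h : a + b = 2 * m)
    (hne : a ≠ m) : mincLog a + mincLog b < 2 * mincLog m := by
  wlog hab : a < b generalizing a b
  · rw [add_comm]
    exact this hb ha (by omega) (by omega) (by omega)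
  · have := add_lt_two_mul_of_strictAnti_fwdDiff strictAnti_fwdDiff_mincLog (a - 1)
      (show 0 < m - a by omega)
    rwa [show a - 1 + 1 = a by omega, show a - 1 + 2 * (m - a) + 1 = b by omega,
      show a - 1 + (m - a) + 1 = m by omega] at this

theorem mincLog_add_mincLog_le {a b m : ℕ} (ha : 0 < a) (hb : 0 < b) (h : a + b = 2 * m) :
    mincLog a + mincLog b ≤ 2 * mincLog m := by
  rcases eq_or_ne a m with rfl | hne
  · rw [show b = a by omega, two_mul]
  · exact (mincLog_add_mincLog_lt ha hb h hne).le

end MincLog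

section LogSum

variable {ι : Type*} {s : Finset ι} {f : ι → ℝ}

theorem sum_mul_log_mean (s : Finset ι) (f : ι → ℝ) :
    (∑ i ∈ s, f i) * Real.log ((∑ i ∈ s, f i) / #s) =
      #s * ((∑ i ∈ s, (#s : ℝ)⁻¹ • f i) * Real.log (∑ i ∈ s, (#s : ℝ)⁻¹ • f i)) := by
  rcases s.eq_empty_or_nonempty with rfl | hs
  · simp
  · have : (#s : ℝ) ≠ 0 := by simpa using hs.ne_empty
    rw [← smul_sum, smul_eq_mul, ← div_eq_inv_mul]
    field_simp

theorem sum_mul_log_mean_le_sum_mul_log (hf : ∀ i ∈ s, 0 ≤ f i) :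
    (∑ i ∈ s, f i) * Real.log ((∑ i ∈ s, f i) / #s) ≤ ∑ i ∈ s, f i * Real.log (f i) := by
  rcases s.eq_empty_or_nonempty with rfl | hs
  · simp
  have hcard : (#s : ℝ) ≠ 0 := by simpa using hs.ne_empty
  have hJensen := Real.convexOn_mul_log.map_sum_le (t := s) (w := fun _ => (#s : ℝ)⁻¹) (p := f)
    (fun _ _ => by positivity) (by simp [hcard]) hf
  calc _ = _ := sum_mul_log_mean s f
    _ ≤ #s * ∑ i ∈ s, (#s : ℝ)⁻¹ • (f i * Real.log (f i)) := by gcongr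
    _ = _ := by rw [← smul_sum, smul_eq_mul, mul_inv_cancel_left₀ hcard]

theorem eq_mean_of_sum_mul_log_mean_eq (hf : ∀ i ∈ s, 0 ≤ f i)
    (h : (∑ i ∈ s, f i) * Real.log ((∑ i ∈ s, f i) / #s) = ∑ i ∈ s, f i * Real.log (f i))
    {j : ι} (hj : j ∈ s) : f j = (∑ i ∈ s, f i) / #s := by
  have hcard : (#s : ℝ) ≠ 0 := by simpa using Finset.ne_empty_of_mem hj
  have hJensen : (fun x : ℝ => x * Real.log x) (∑ i ∈ s, (#s : ℝ)⁻¹ • f i) =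
      ∑ i ∈ s, (#s : ℝ)⁻¹ • (fun x : ℝ => x * Real.log x) (f i) := by
    rw [← smul_sum (f := fun i => f i * Real.log (f i)), ← h, sum_mul_log_mean, smul_eq_mul,
      inv_mul_cancel_left₀ hcard]
  have := (Real.strictConvexOn_mul_log.map_sum_eq_iff (fun _ _ => by positivity)
    (by simp [hcard]) hf).1 hJensen j hj
  rwa [← smul_sum, smul_eq_mul, ← div_eq_inv_mul] at this

end LogSum

section PerfectMatchings

variable {ι κ : Type*} [DecidableEq κ]

section ColSupport

variable [Fintype ι]

/-- The support of column `l` of the 0/1 matrix with row supports `A`. -/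
def colSupport (A : ι → Finset κ) (l : κ) : Finset ι :=
  {i | l ∈ A i}

theorem mem_colSupport {A : ι → Finset κ} {i : ι} {l : κ} : i ∈ colSupport A l ↔ l ∈ A i :=
  mem_filter_univ i

end ColSupport

variable [DecidableEq ι]

/-- The row supports `A` with row `i` replaced by `{j}` and column `j` cleared in all other rows.
This encodes the minor at `(i, j)` without changing the index types: for `j ∈ A i` its perfect
matchings are those of `A` that send `i` to `j`. -/
def pin (A : ι → Finset κ) (i : ι) (j : κ) : ι → Finset κ :=
  Function.update (fun p => (A p).erase j) i {j}

theorem pin_self (A : ι → Finset κ) (i : ι) (j : κ) : pin A i j i = {j} :=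
  Function.update_self ..

theorem pin_of_ne (A : ι → Finset κ) {i p : ι} (h : p ≠ i) (j : κ) :
    pin A i j p = (A p).erase j :=
  Function.update_of_ne h ..

theorem pin_le {A : ι → Finset κ} {i : ι} {j : κ} (hj : j ∈ A i) : pin A i j ≤ A :=
  update_le_iff.2 ⟨singleton_subset_iff.2 hj, fun p _ => erase_subset j (A p)⟩

variable [Fintype ι] [Fintype κ]

/-- The perfect matchings of the bipartite graph in which the row `i` is joined to the columns in
`A i`. Their number is the permanent of the 0/1 matrix with row supports `A`. -/
def perfectMatchings (A : ι → Finset κ) : Finset (ι ≃ κ) :=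
  {σ | ∀ i, σ i ∈ A i}

theorem mem_perfectMatchings {A : ι → Finset κ} {σ : ι ≃ κ} :
    σ ∈ perfectMatchings A ↔ ∀ i, σ i ∈ A i :=
  mem_filter_univ σ

theorem card_pos_of_mem_perfectMatchings {A : ι → Finset κ} {σ : ι ≃ κ}
    (hσ : σ ∈ perfectMatchings A) (i : ι) : 0 < #(A i) :=
  Finset.card_pos.2 ⟨σ i, mem_perfectMatchings.1 hσ i⟩

theorem perfectMatchings_eq_singleton {A : ι → Finset κ} {σ : ι ≃ κ} (h : ∀ i, A i = {σ i}) :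
    perfectMatchings A = {σ} := by
  ext τ
  simp [mem_perfectMatchings, h, Equiv.ext_iff]

theorem mem_perfectMatchings_pin {A : ι → Finset κ} {i : ι} {j : κ} (hj : j ∈ A i) {σ : ι ≃ κ} :
    σ ∈ perfectMatchings (pin A i j) ↔ σ ∈ perfectMatchings A ∧ σ i = j := by
  rw [mem_perfectMatchings, mem_perfectMatchings, pin,
    Function.forall_update_iff _ fun p (s : Finset κ) => σ p ∈ s]
  simp only [mem_singleton, mem_erase]
  constructor
  · rintro ⟨rfl, h⟩
    refine ⟨fun p => ?_, rfl⟩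
    rcases eq_or_ne p i with rfl | hp
    exacts [hj, (h p hp).2]
  · rintro ⟨h, rfl⟩
    exact ⟨rfl, fun p hp => ⟨σ.injective.ne hp, h p⟩⟩

theorem mem_perfectMatchings_pin_apply {A : ι → Finset κ} {σ : ι ≃ κ}
    (hσ : σ ∈ perfectMatchings A) (i : ι) : σ ∈ perfectMatchings (pin A i (σ i)) :=
  (mem_perfectMatchings_pin (mem_perfectMatchings.1 hσ i)).2 ⟨hσ, rfl⟩

theorem perfectMatchings_pin {A : ι → Finset κ} {i : ι} {j : κ} (hj : j ∈ A i) :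
    perfectMatchings (pin A i j) = {σ ∈ perfectMatchings A | σ i = j} := by
  ext σ
  rw [mem_perfectMatchings_pin hj, mem_filter]

theorem sum_card_perfectMatchings_pin_row (A : ι → Finset κ) (i : ι) :
    ∑ j ∈ A i, #(perfectMatchings (pin A i j)) = #(perfectMatchings A) := by
  rw [card_eq_sum_card_fiberwise (f := fun σ : ι ≃ κ => σ i) (t := A i)
    fun σ hσ => mem_perfectMatchings.1 hσ i]
  exact sum_congr rfl fun j hj => by rw [perfectMatchings_pin hj]

theorem sum_card_perfectMatchings_pin_col (A : ι → Finset κ) (j : κ) :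
    ∑ i ∈ colSupport A j, #(perfectMatchings (pin A i j)) = #(perfectMatchings A) := by
  rw [card_eq_sum_card_fiberwise (f := fun σ : ι ≃ κ => σ.symm j) (t := colSupport A j)
    fun σ hσ => mem_colSupport.2 (by simpa using mem_perfectMatchings.1 hσ (σ.symm j))]
  refine sum_congr rfl fun i hi => ?_
  rw [perfectMatchings_pin (mem_colSupport.1 hi)]
  simp only [Equiv.symm_apply_eq, eq_comm (a := j)]

end PerfectMatchings

section MincBregman

variable {ι κ : Type*} [DecidableEq ι] [DecidableEq κ] [Fintype ι] [Fintype κ]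
  {A : ι → Finset κ} {σ : ι ≃ κ}

/-- The logarithm of the number of perfect matchings minus that of the Minc–Bregman bound
`∏ i, (rᵢ!) ^ (1 / rᵢ)`, where `rᵢ` is the size of row `i`. It is meant for row supports that have a
perfect matching. -/
noncomputable def bregmanExcess (A : ι → Finset κ) : ℝ :=
  Real.log #(perfectMatchings A) - ∑ i, mincLog #(A i)

/-- The defect in the log-sum inequality for the expansion of the number of perfect matchings along
row `i`. -/
noncomputable def rowDefect (A : ι → Finset κ) (i : ι) : ℝ :=
  ∑ j ∈ A i, #(perfectMatchings (pin A i j)) * Real.log #(perfectMatchings (pin A i j)) -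
    #(perfectMatchings A) * Real.log (#(perfectMatchings A) / #(A i))

theorem cast_sum_card_perfectMatchings_pin_row (A : ι → Finset κ) (i : ι) :
    ∑ j ∈ A i, (#(perfectMatchings (pin A i j)) : ℝ) = #(perfectMatchings A) := by
  exact_mod_cast sum_card_perfectMatchings_pin_row A i

theorem rowDefect_nonneg (A : ι → Finset κ) (i : ι) : 0 ≤ rowDefect A i := by
  rw [rowDefect, sub_nonneg, ← cast_sum_card_perfectMatchings_pin_row A i]
  exact sum_mul_log_mean_le_sum_mul_log fun j _ => Nat.cast_nonneg _

theorem card_perfectMatchings_pin_of_rowDefect_eq_zero {i : ι} (h : rowDefect A i = 0) {j : κ}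
    (hj : j ∈ A i) :
    (#(perfectMatchings (pin A i j)) : ℝ) = #(perfectMatchings A) / #(A i) := by
  rw [rowDefect, sub_eq_zero, ← cast_sum_card_perfectMatchings_pin_row A i] at h
  rw [eq_mean_of_sum_mul_log_mean_eq (fun j _ => Nat.cast_nonneg _) h.symm hj,
    cast_sum_card_perfectMatchings_pin_row]

theorem mincLog_card_pin (hσ : σ ∈ perfectMatchings A) (i l : ι) :
    mincLog #(pin A i (σ i) l) = mincLog #(A l) -
      (if σ i ∈ A l then mincLog #(A l) - mincLog (#(A l) - 1) else 0) -
      (if i = l then mincLog (#(A l) - 1) else 0) := by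
  rcases eq_or_ne l i with rfl | hl
  · simp [pin_self, mincLog_one, mem_perfectMatchings.1 hσ l]
  · rw [pin_of_ne A hl, card_erase_eq_ite, if_neg hl.symm]
    split_ifs <;> simp

-- This identity is the reason for the factors `(r!) ^ (1 / r)` in the Minc–Bregman bound.
theorem sum_mincLog_card_pin (hσ : σ ∈ perfectMatchings A) (l : ι) :
    ∑ i, mincLog #(pin A i (σ i) l) =
      Fintype.card ι * mincLog #(A l) - Real.log #(A l) := by
  have hcol : #{i | σ i ∈ A l} = #(A l) := by
    rw [← card_map σ.symm.toEmbedding]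
    congr 1
    ext i
    simp
  obtain ⟨r, hr⟩ := Nat.exists_eq_add_one.2 (card_pos_of_mem_perfectMatchings hσ l)
  rw [sum_congr rfl fun i _ => mincLog_card_pin hσ i l, sum_sub_distrib, sum_sub_distrib,
    sum_ite_eq', if_pos (mem_univ l), ← sum_filter, sum_const, sum_const, Finset.card_univ, hcol,
    nsmul_eq_mul, nsmul_eq_mul, hr, add_tsub_cancel_right]
  have := succ_mul_mincLog_succ r
  push_cast at this ⊢
  linarith

theorem sum_log_card_perfectMatchings_pin (A : ι → Finset κ) :
    ∑ σ ∈ perfectMatchings A, ∑ i, Real.log #(perfectMatchings (pin A i (σ i))) =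
      ∑ i, ∑ j ∈ A i,
        #(perfectMatchings (pin A i j)) * Real.log #(perfectMatchings (pin A i j)) := by
  rw [sum_comm]
  refine sum_congr rfl fun i _ => ?_
  rw [← sum_fiberwise_of_maps_to (g := fun σ : ι ≃ κ => σ i) (t := A i)
    fun σ hσ => mem_perfectMatchings.1 hσ i]
  refine sum_congr rfl fun j hj => ?_
  rw [← perfectMatchings_pin hj, ← nsmul_eq_mul]
  exact sum_eq_card_nsmul fun σ hσ => by rw [((mem_perfectMatchings_pin hj).1 hσ).2]

theorem sum_bregmanExcess_pin (hA : (perfectMatchings A).Nonempty) :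
    ∑ σ ∈ perfectMatchings A, ∑ i, bregmanExcess (pin A i (σ i)) =
      #(perfectMatchings A) * Fintype.card ι * bregmanExcess A + ∑ i, rowDefect A i := by
  obtain ⟨τ, hτ⟩ := hA
  have hlog (i : ι) : Real.log (#(perfectMatchings A) / #(A i)) =
      Real.log #(perfectMatchings A) - Real.log #(A i) :=
    Real.log_div (Nat.cast_ne_zero.2 (Finset.card_pos.2 ⟨τ, hτ⟩).ne')
      (Nat.cast_ne_zero.2 (card_pos_of_mem_perfectMatchings hτ i).ne')
  have hfactors : ∀ σ ∈ perfectMatchings A, ∑ i, ∑ l, mincLog #(pin A i (σ i) l) =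
      Fintype.card ι * ∑ l, mincLog #(A l) - ∑ l, Real.log #(A l) := by
    intro σ hσ
    rw [sum_comm, mul_sum, ← sum_sub_distrib]
    exact sum_congr rfl fun l _ => sum_mincLog_card_pin hσ l
  simp only [bregmanExcess, rowDefect, hlog, sum_sub_distrib]
  rw [sum_log_card_perfectMatchings_pin, sum_congr rfl hfactors, sum_const, nsmul_eq_mul,
    ← mul_sum, sum_sub_distrib, sum_const, Finset.card_univ, nsmul_eq_mul]
  ring

theorem bregmanExcess_eq_zero_of_forall_eq_singleton (h : ∀ i, A i = {σ i}) :
    bregmanExcess A = 0 := by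
  simp [bregmanExcess, perfectMatchings_eq_singleton h, h, mincLog_one]

theorem exists_pin_lt_and_bregmanExcess_le (hσ : σ ∈ perfectMatchings A) (h : ∃ i, A i ≠ {σ i}) :
    ∃ i, ∃ τ ∈ perfectMatchings A, pin A i (τ i) < A ∧
      bregmanExcess A ≤ bregmanExcess (pin A i (τ i)) := by
  by_contra! hlt
  have hle : ∀ τ ∈ perfectMatchings A, ∀ i, bregmanExcess (pin A i (τ i)) ≤ bregmanExcess A := by
    intro τ hτ i
    rcases (pin_le (mem_perfectMatchings.1 hτ i)).eq_or_lt with heq | hpin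
    exacts [(congrArg bregmanExcess heq).le, (hlt i τ hτ hpin).le]
  obtain ⟨i, hi⟩ := h
  have hpin : pin A i (σ i) < A := (pin_le (mem_perfectMatchings.1 hσ i)).lt_of_ne fun heq =>
    hi (by rw [← pin_self A i (σ i), heq])
  have hsum : ∑ τ ∈ perfectMatchings A, ∑ i, bregmanExcess (pin A i (τ i)) <
      ∑ _τ ∈ perfectMatchings A, ∑ _i : ι, bregmanExcess A :=
    sum_lt_sum (fun τ hτ => sum_le_sum fun i _ => hle τ hτ i)
      ⟨σ, hσ, sum_lt_sum (fun i _ => hle σ hσ i) ⟨i, mem_univ i, hlt i σ hσ hpin⟩⟩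
  have hdefect : 0 ≤ ∑ i, rowDefect A i := sum_nonneg fun i _ => rowDefect_nonneg A i
  rw [sum_bregmanExcess_pin ⟨σ, hσ⟩, sum_const, sum_const, Finset.card_univ, nsmul_eq_mul,
    nsmul_eq_mul] at hsum
  linarith

/-- The **Minc–Bregman inequality** in logarithmic form. -/
theorem bregmanExcess_nonpos (hA : (perfectMatchings A).Nonempty) : bregmanExcess A ≤ 0 := by
  induction A using WellFoundedLT.induction with
  | ind A ih =>
    obtain ⟨σ, hσ⟩ := hA
    by_cases h : ∃ i, A i ≠ {σ i}
    · obtain ⟨i, τ, hτ, hlt, hle⟩ := exists_pin_lt_and_bregmanExcess_le hσ h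
      exact hle.trans (ih _ hlt ⟨τ, mem_perfectMatchings_pin_apply hτ i⟩)
    · exact (bregmanExcess_eq_zero_of_forall_eq_singleton (by simpa using h)).le

end MincBregman

section CardErase

variable {κ : Type*} [DecidableEq κ] {s : Finset κ} {j : κ}

theorem one_sub_inv_eq_mul_card_erase (hj : j ∈ s) :
    1 - (#s : ℝ)⁻¹ = #(s.erase j) * (#s : ℝ)⁻¹ := by
  have hs : (#s : ℝ) ≠ 0 := Nat.cast_ne_zero.2 (Finset.card_pos.2 ⟨j, hj⟩).ne'
  rw [cast_card_erase_of_mem hj, sub_mul, mul_inv_cancel₀ hs, one_mul]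

theorem one_sub_inv_mul_inv_card_erase_le (j : κ) {r : ℕ} (hr : 0 < r) (hs : r ≤ #s) :
    (1 - (r : ℝ)⁻¹) * (#(s.erase j) : ℝ)⁻¹ ≤ (#s : ℝ)⁻¹ := by
  by_cases hj : j ∈ s
  · calc (1 - (r : ℝ)⁻¹) * (#(s.erase j) : ℝ)⁻¹
        ≤ (1 - (#s : ℝ)⁻¹) * (#(s.erase j) : ℝ)⁻¹ := by gcongr
      _ = #(s.erase j) * (#(s.erase j) : ℝ)⁻¹ * (#s : ℝ)⁻¹ := by
        rw [one_sub_inv_eq_mul_card_erase hj, mul_right_comm]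
      _ ≤ (#s : ℝ)⁻¹ := mul_le_of_le_one_left (by positivity) (mul_inv_le_one ..)
  · rw [erase_eq_of_notMem hj]
    exact mul_le_of_le_one_left (by positivity) (sub_le_self _ (by positivity))

theorem mem_and_card_eq_of_one_sub_inv_mul_inv_card_erase_eq {r : ℕ} (hr : 0 < r) (hs : 0 < #s)
    (h : (1 - (r : ℝ)⁻¹) * (#(s.erase j) : ℝ)⁻¹ = (#s : ℝ)⁻¹) : j ∈ s ∧ #s = r := by
  have hs' : (#s : ℝ)⁻¹ ≠ 0 := by positivity
  by_cases hj : j ∈ s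
  · have herase : (#(s.erase j) : ℝ) ≠ 0 := fun h0 =>
      hs' (by rw [← h, h0, _root_.inv_zero, mul_zero])
    rw [mul_inv_eq_iff_eq_mul₀ herase, mul_comm, ← one_sub_inv_eq_mul_card_erase hj,
      sub_right_inj, _root_.inv_inj, Nat.cast_inj] at h
    exact ⟨hj, h.symm⟩
  · rw [erase_eq_of_notMem hj, mul_eq_right₀ hs', sub_eq_self] at h
    exact absurd h (by positivity)

end CardErase

section MincBregmanEquality

variable {ι κ : Type*} [DecidableEq ι] [DecidableEq κ] [Fintype ι] [Fintype κ]
  {A : ι → Finset κ} {σ : ι ≃ κ}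

theorem bregmanExcess_pin_nonpos (hσ : σ ∈ perfectMatchings A) (i : ι) :
    bregmanExcess (pin A i (σ i)) ≤ 0 :=
  bregmanExcess_nonpos ⟨σ, mem_perfectMatchings_pin_apply hσ i⟩

theorem rowDefect_eq_zero_of_bregmanExcess_eq_zero (hA : (perfectMatchings A).Nonempty)
    (h : bregmanExcess A = 0) (i : ι) : rowDefect A i = 0 := by
  have hsum := sum_bregmanExcess_pin hA
  rw [h, mul_zero, zero_add] at hsum
  have hle : ∑ i, rowDefect A i ≤ 0 := hsum ▸
    sum_nonpos fun σ hσ => sum_nonpos fun i _ => bregmanExcess_pin_nonpos hσ i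
  have hnonneg : ∀ i ∈ univ, 0 ≤ rowDefect A i := fun i _ => rowDefect_nonneg A i
  exact (sum_eq_zero_iff_of_nonneg hnonneg).1 (hle.antisymm (sum_nonneg hnonneg)) i (mem_univ i)

theorem bregmanExcess_pin_eq_zero (hσ : σ ∈ perfectMatchings A) (h : bregmanExcess A = 0) (i : ι) :
    bregmanExcess (pin A i (σ i)) = 0 := by
  have hsum := sum_bregmanExcess_pin ⟨σ, hσ⟩
  rw [h, mul_zero, zero_add,
    sum_eq_zero fun i _ => rowDefect_eq_zero_of_bregmanExcess_eq_zero ⟨σ, hσ⟩ h i,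
    sum_eq_zero_iff_of_nonpos fun τ hτ => sum_nonpos fun i _ => bregmanExcess_pin_nonpos hτ i]
    at hsum
  exact (sum_eq_zero_iff_of_nonpos fun i _ => bregmanExcess_pin_nonpos hσ i).1 (hsum σ hσ) i
    (mem_univ i)

theorem card_perfectMatchings_pin_of_bregmanExcess_eq_zero (hA : (perfectMatchings A).Nonempty)
    (h : bregmanExcess A = 0) {i : ι} {j : κ} (hj : j ∈ A i) :
    (#(perfectMatchings (pin A i j)) : ℝ) = #(perfectMatchings A) / #(A i) :=
  card_perfectMatchings_pin_of_rowDefect_eq_zero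
    (rowDefect_eq_zero_of_bregmanExcess_eq_zero hA h i) hj

theorem exists_mem_perfectMatchings_apply_eq (hA : (perfectMatchings A).Nonempty)
    (h : bregmanExcess A = 0) {i : ι} {j : κ} (hj : j ∈ A i) :
    ∃ σ ∈ perfectMatchings A, σ i = j := by
  have hpos : (0 : ℝ) < #(perfectMatchings (pin A i j)) := by
    rw [card_perfectMatchings_pin_of_bregmanExcess_eq_zero hA h hj]
    have := Finset.card_pos.2 hA
    have := Finset.card_pos.2 ⟨j, hj⟩
    positivity
  obtain ⟨σ, hσ⟩ := Finset.card_pos.1 (Nat.cast_pos.1 hpos)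
  exact ⟨σ, (mem_perfectMatchings_pin hj).1 hσ⟩

theorem sum_colSupport_inv_card_eq_one (hA : (perfectMatchings A).Nonempty)
    (h : bregmanExcess A = 0) (l : κ) : ∑ i ∈ colSupport A l, (#(A i) : ℝ)⁻¹ = 1 := by
  have hcol : ∑ i ∈ colSupport A l, (#(perfectMatchings (pin A i l)) : ℝ) =
      #(perfectMatchings A) := by
    exact_mod_cast sum_card_perfectMatchings_pin_col A l
  rw [sum_congr rfl fun i hi =>
    card_perfectMatchings_pin_of_bregmanExcess_eq_zero hA h (mem_colSupport.1 hi)] at hcol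
  simp only [div_eq_mul_inv, ← mul_sum] at hcol
  exact (mul_eq_left₀ (Nat.cast_ne_zero.2 (Finset.card_pos.2 hA).ne')).1 hcol

theorem sum_colSupport_erase_inv_card_erase_eq_one (hA : (perfectMatchings A).Nonempty)
    (h : bregmanExcess A = 0) {i : ι} {j l : κ} (hj : j ∈ A i) (hjl : j ≠ l) :
    ∑ q ∈ (colSupport A l).erase i, (#((A q).erase j) : ℝ)⁻¹ = 1 := by
  obtain ⟨σ, hσ, rfl⟩ := exists_mem_perfectMatchings_apply_eq hA h hj
  have hcol : colSupport (pin A i (σ i)) l = (colSupport A l).erase i := by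
    ext q
    rcases eq_or_ne q i with rfl | hq
    · simp [mem_colSupport, pin_self, hjl.symm]
    · simp [mem_colSupport, pin_of_ne A hq, hq, hjl.symm]
  rw [← sum_colSupport_inv_card_eq_one ⟨σ, mem_perfectMatchings_pin_apply hσ i⟩
    (bregmanExcess_pin_eq_zero hσ h i) l, hcol]
  exact sum_congr rfl fun q hq => by rw [pin_of_ne A (ne_of_mem_erase hq)]

theorem sum_colSupport_erase_inv_card (hA : (perfectMatchings A).Nonempty) (h : bregmanExcess A = 0)
    {i : ι} {l : κ} (hl : l ∈ A i) :
    ∑ q ∈ (colSupport A l).erase i, (#(A q) : ℝ)⁻¹ = 1 - (#(A i) : ℝ)⁻¹ := by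
  rw [eq_sub_iff_add_eq, sum_erase_add _ _ (mem_colSupport.2 hl),
    sum_colSupport_inv_card_eq_one hA h]

theorem eq_of_mem_of_card_eq_one (hA : (perfectMatchings A).Nonempty) (h : bregmanExcess A = 0)
    {i p : ι} {l : κ} (hi : l ∈ A i) (hp : l ∈ A p) (hcard : #(A i) = 1) : p = i := by
  by_contra hpi
  have hsum := sum_colSupport_erase_inv_card hA h hi
  rw [hcard, Nat.cast_one, inv_one, sub_self, sum_eq_zero_iff_of_nonneg fun _ _ => by positivity]
    at hsum
  have := hsum p (mem_erase.2 ⟨hpi, mem_colSupport.2 hp⟩)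
  simp [Finset.ne_empty_of_mem hp] at this

theorem mem_and_card_eq_of_card_minimal (hA : (perfectMatchings A).Nonempty)
    (h : bregmanExcess A = 0) {i p : ι} {j l : κ} (hl : l ∈ A i)
    (hmin : ∀ q, l ∈ A q → #(A i) ≤ #(A q)) (hj : j ∈ A i) (hjl : j ≠ l) (hp : l ∈ A p)
    (hpi : p ≠ i) : j ∈ A p ∧ #(A p) = #(A i) := by
  have hr : 0 < #(A i) := Finset.card_pos.2 ⟨l, hl⟩
  have hmin' : ∀ q ∈ (colSupport A l).erase i, #(A i) ≤ #(A q) := fun q hq =>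
    hmin q (mem_colSupport.1 (mem_of_mem_erase hq))
  have hsum : ∑ q ∈ (colSupport A l).erase i, (1 - (#(A i) : ℝ)⁻¹) * (#((A q).erase j) : ℝ)⁻¹ =
      ∑ q ∈ (colSupport A l).erase i, (#(A q) : ℝ)⁻¹ := by
    rw [← mul_sum, sum_colSupport_erase_inv_card_erase_eq_one hA h hj hjl, mul_one,
      sum_colSupport_erase_inv_card hA h hl]
  rw [sum_eq_sum_iff_of_le fun q hq => one_sub_inv_mul_inv_card_erase_le j hr (hmin' q hq)] at hsum
  exact mem_and_card_eq_of_one_sub_inv_mul_inv_card_erase_eq hr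
    (Finset.card_pos.2 ⟨l, hp⟩) (hsum p (mem_erase.2 ⟨hpi, mem_colSupport.2 hp⟩))

theorem eq_of_mem_of_card_minimal (hA : (perfectMatchings A).Nonempty) (h : bregmanExcess A = 0)
    {i p : ι} {l : κ} (hi : l ∈ A i) (hmin : ∀ q, l ∈ A q → #(A i) ≤ #(A q)) (hp : l ∈ A p) :
    A i = A p := by
  rcases eq_or_ne p i with rfl | hpi
  · rfl
  have hcard : 1 < #(A i) := by
    refine lt_of_le_of_ne (Finset.card_pos.2 ⟨l, hi⟩) fun hone => hpi ?_
    exact eq_of_mem_of_card_eq_one hA h hi hp hone.symm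
  have hrow {j : κ} (hj : j ∈ A i) (hjl : j ≠ l) : j ∈ A p ∧ #(A p) = #(A i) :=
    mem_and_card_eq_of_card_minimal hA h hi hmin hj hjl hp hpi
  obtain ⟨k, hk, hkl⟩ := exists_mem_ne hcard l
  refine eq_of_subset_of_card_le (fun j hj => ?_) (hrow hk hkl).2.le
  rcases eq_or_ne j l with rfl | hjl
  exacts [hp, (hrow hj hjl).1]

/-- The equality case of the **Minc–Bregman inequality**: rows that meet are equal. -/
theorem eq_of_mem_of_bregmanExcess_eq_zero (hA : (perfectMatchings A).Nonempty)
    (h : bregmanExcess A = 0) {i p : ι} {l : κ} (hi : l ∈ A i) (hp : l ∈ A p) : A i = A p := by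
  obtain ⟨q, hq, hmin⟩ :=
    exists_min_image (colSupport A l) (fun q => #(A q)) ⟨i, mem_colSupport.2 hi⟩
  have hq : l ∈ A q := mem_colSupport.1 hq
  have hmin : ∀ r, l ∈ A r → #(A q) ≤ #(A r) := fun r hr => hmin r (mem_colSupport.2 hr)
  exact (eq_of_mem_of_card_minimal hA h hq hmin hi).symm.trans
    (eq_of_mem_of_card_minimal hA h hq hmin hp)

theorem card_colSupport_of_bregmanExcess_eq_zero (hA : (perfectMatchings A).Nonempty)
    (h : bregmanExcess A = 0) {i : ι} {l : κ} (hl : l ∈ A i) : #(colSupport A l) = #(A i) := by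
  have hsum := sum_colSupport_inv_card_eq_one hA h l
  have hrows : ∀ q ∈ colSupport A l, (#(A q) : ℝ)⁻¹ = (#(A i) : ℝ)⁻¹ := fun q hq => by
    rw [eq_of_mem_of_bregmanExcess_eq_zero hA h (mem_colSupport.1 hq) hl]
  rw [sum_congr rfl hrows, sum_const, nsmul_eq_mul] at hsum
  exact_mod_cast eq_of_mul_inv_eq_one hsum

end MincBregmanEquality

section ExtremalPairs

variable {ι κ : Type*} [DecidableEq ι] [DecidableEq κ] [Fintype ι] [Fintype κ]
  {A : ι → Finset κ} {m : ℕ}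

theorem perfectMatchings_nonempty_of_card_mul_card_compl
    (h : #(perfectMatchings A) * #(perfectMatchings Aᶜ) = m ! ^ 4) :
    (perfectMatchings A).Nonempty ∧ (perfectMatchings Aᶜ).Nonempty := by
  rw [← Finset.card_pos, ← Finset.card_pos, ← CanonicallyOrderedAdd.mul_pos, h]
  positivity

theorem bregmanExcess_add_bregmanExcess_compl (hι : Fintype.card ι = 2 * m)
    (h : #(perfectMatchings A) * #(perfectMatchings Aᶜ) = m ! ^ 4) :
    bregmanExcess A + bregmanExcess Aᶜ =
      ∑ i, (2 * mincLog m - (mincLog #(A i) + mincLog #(Aᶜ i))) := by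
  obtain ⟨hA, hAc⟩ := perfectMatchings_nonempty_of_card_mul_card_compl h
  have hlog : Real.log #(perfectMatchings A) + Real.log #(perfectMatchings Aᶜ) =
      4 * (m * mincLog m) := by
    rw [← Real.log_mul (Nat.cast_ne_zero.2 (Finset.card_pos.2 hA).ne')
      (Nat.cast_ne_zero.2 (Finset.card_pos.2 hAc).ne'), ← Nat.cast_mul, h, Nat.cast_pow,
      Real.log_pow, mul_mincLog, Nat.cast_ofNat]
  rw [sum_sub_distrib, sum_add_distrib, sum_const, Finset.card_univ, hι, nsmul_eq_mul,
    bregmanExcess, bregmanExcess, Nat.cast_mul, Nat.cast_ofNat]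
  linarith

theorem bregmanExcess_eq_zero_and_card_eq (hι : Fintype.card ι = 2 * m)
    (hκ : Fintype.card κ = 2 * m)
    (h : #(perfectMatchings A) * #(perfectMatchings Aᶜ) = m ! ^ 4) :
    bregmanExcess A = 0 ∧ ∀ i, #(A i) = m := by
  obtain ⟨hA, hAc⟩ := perfectMatchings_nonempty_of_card_mul_card_compl h
  have hpos (i : ι) : 0 < #(A i) := card_pos_of_mem_perfectMatchings hA.choose_spec i
  have hposc (i : ι) : 0 < #(Aᶜ i) := card_pos_of_mem_perfectMatchings hAc.choose_spec i
  have hadd (i : ι) : #(A i) + #(Aᶜ i) = 2 * m := (card_add_card_compl (A i)).trans hκ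
  have hnonneg : ∀ i ∈ univ, 0 ≤ 2 * mincLog m - (mincLog #(A i) + mincLog #(Aᶜ i)) :=
    fun i _ => sub_nonneg.2 (mincLog_add_mincLog_le (hpos i) (hposc i) (hadd i))
  have hsum := bregmanExcess_add_bregmanExcess_compl hι h
  have hle := bregmanExcess_nonpos hA
  have hlec := bregmanExcess_nonpos hAc
  have hge := sum_nonneg hnonneg
  refine ⟨by linarith, fun i => ?_⟩
  by_contra hne
  have hzero := (sum_eq_zero_iff_of_nonneg hnonneg).1 (by linarith) i (mem_univ i)
  linarith [mincLog_add_mincLog_lt (hpos i) (hposc i) (hadd i) hne]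

end ExtremalPairs

section Blocks

variable {ι κ : Type*} [DecidableEq ι] [DecidableEq κ] [Fintype κ]

/-- The row supports of the 0/1 matrix whose ones form the two blocks `R × C` and `Rᶜ × Cᶜ`. -/
def blockSupport (R : Finset ι) (C : Finset κ) : ι → Finset κ :=
  fun i => if i ∈ R then C else Cᶜ

theorem mem_blockSupport {R : Finset ι} {C : Finset κ} {i : ι} {j : κ} :
    j ∈ blockSupport R C i ↔ (i ∈ R ↔ j ∈ C) := by
  by_cases hi : i ∈ R <;> simp [blockSupport, hi]

theorem compl_blockSupport (R : Finset ι) (C : Finset κ) :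
    (blockSupport R C)ᶜ = blockSupport R Cᶜ := by
  ext i j
  simp only [Pi.compl_apply, mem_compl, mem_blockSupport]
  tauto

variable [Fintype ι]

theorem exists_equiv_mem_iff {s : Finset ι} {t : Finset κ} (h : #s = #t) (hc : #sᶜ = #tᶜ) :
    ∃ e : ι ≃ κ, ∀ i, e i ∈ t ↔ i ∈ s := by
  have e₁ : {i // i ∈ s} ≃ {j // j ∈ t} := Finset.equivOfCardEq h
  have e₂ : {i // i ∉ s} ≃ {j // j ∉ t} := Fintype.equivOfCardEq (by
    simpa only [Fintype.card_subtype, ← mem_compl, filter_univ_mem] using hc)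
  refine ⟨(sumCompl (· ∈ s)).symm.trans ((sumCongr e₁ e₂).trans (sumCompl (· ∈ t))), fun i => ?_⟩
  by_cases hi : i ∈ s
  · simp [hi]
  · simpa [hi] using (e₂ ⟨i, hi⟩).2

theorem exists_equiv_map_eq {s : Finset ι} {t : Finset κ} (h : #s = #t) (hc : #sᶜ = #tᶜ) :
    ∃ e : ι ≃ κ, s.map e.toEmbedding = t := by
  obtain ⟨e, he⟩ := exists_equiv_mem_iff h hc
  exact ⟨e, by ext j; rw [mem_map_equiv, ← he, apply_symm_apply]⟩

theorem card_perm_mem_iff (s : Finset ι) :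
    #{σ : Perm ι | ∀ i, i ∈ s ↔ σ i ∈ s} = (#s)! * (#sᶜ)! := by
  have hstab := DomMulAct.stabilizer_card fun i => decide (i ∈ s)
  simp only [Fintype.prod_bool, Fintype.card_subtype, decide_eq_true_eq, decide_eq_false_iff_not,
    ← mem_compl, filter_univ_mem] at hstab
  rw [← hstab]
  congr 1
  ext σ
  simp [funext_iff, iff_comm]

theorem card_perfectMatchings_blockSupport {R : Finset ι} {C : Finset κ} (h : #R = #C)
    (hc : #Rᶜ = #Cᶜ) : #(perfectMatchings (blockSupport R C)) = (#R)! * (#Rᶜ)! := by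
  obtain ⟨e, he⟩ := exists_equiv_mem_iff h hc
  rw [← card_perm_mem_iff]
  refine (card_equiv ((Equiv.refl ι).equivCongr e) fun σ => ?_).symm
  simp [mem_perfectMatchings, mem_blockSupport, he]

theorem eq_blockSupport_of_bregmanExcess_eq_zero {A : ι → Finset κ} {m : ℕ}
    (hκ : Fintype.card κ = 2 * m) (hA : (perfectMatchings A).Nonempty) (h : bregmanExcess A = 0)
    (hcard : ∀ i, #(A i) = m) {i : ι} {l : κ} (hl : l ∈ A i) :
    A = blockSupport (colSupport A l) (A i) := by
  funext p
  by_cases hp : l ∈ A p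
  · rw [blockSupport, if_pos (mem_colSupport.2 hp), eq_of_mem_of_bregmanExcess_eq_zero hA h hp hl]
  · rw [blockSupport, if_neg (mt mem_colSupport.1 hp)]
    refine eq_of_subset_of_card_le (fun j hj => mem_compl.2 fun hji => hp ?_) ?_
    · rwa [eq_of_mem_of_bregmanExcess_eq_zero hA h hj hji]
    · rw [card_compl, hκ, hcard, hcard]
      omega

theorem exists_eq_blockSupport_of_card_mul_card_compl {A : ι → Finset κ} {m : ℕ}
    (hι : Fintype.card ι = 2 * m) (hκ : Fintype.card κ = 2 * m)
    (h : #(perfectMatchings A) * #(perfectMatchings Aᶜ) = m ! ^ 4) :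
    ∃ R C, #R = m ∧ #C = m ∧ A = blockSupport R C := by
  have hA := (perfectMatchings_nonempty_of_card_mul_card_compl h).1
  obtain ⟨h0, hcard⟩ := bregmanExcess_eq_zero_and_card_eq hι hκ h
  rcases isEmpty_or_nonempty ι with hempty | ⟨⟨i⟩⟩
  · have hm : m = 0 := by rw [Fintype.card_eq_zero] at hι; omega
    exact ⟨∅, ∅, hm.symm, hm.symm, Subsingleton.elim _ _⟩
  · obtain ⟨l, hl⟩ := Finset.card_pos.1 (card_pos_of_mem_perfectMatchings hA.choose_spec i)
    exact ⟨colSupport A l, A i,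
      (card_colSupport_of_bregmanExcess_eq_zero hA h0 hl).trans (hcard i), hcard i,
      eq_blockSupport_of_bregmanExcess_eq_zero hκ hA h0 hcard hl⟩

theorem card_mul_card_compl_blockSupport {R : Finset ι} {C : Finset κ} {m : ℕ} (hR : #R = m)
    (hRc : #Rᶜ = m) (hC : #C = m) (hCc : #Cᶜ = m) :
    #(perfectMatchings (blockSupport R C)) * #(perfectMatchings (blockSupport R C)ᶜ) =
      m ! ^ 4 := by
  rw [compl_blockSupport, card_perfectMatchings_blockSupport (by rw [hR, hC]) (by rw [hRc, hCc]),
    card_perfectMatchings_blockSupport (by rw [hR, hCc]) (by rw [hRc, compl_compl, hC]), hR, hRc]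
  ring

theorem card_perfectMatchings_mul_card_compl_eq_iff {A : ι → Finset κ} {m : ℕ}
    (hι : Fintype.card ι = 2 * m) (hκ : Fintype.card κ = 2 * m) :
    #(perfectMatchings A) * #(perfectMatchings Aᶜ) = m ! ^ 4 ↔
      ∃ R C, #R = m ∧ #C = m ∧ A = blockSupport R C := by
  refine ⟨exists_eq_blockSupport_of_card_mul_card_compl hι hκ, ?_⟩
  rintro ⟨R, C, hR, hC, rfl⟩
  exact card_mul_card_compl_blockSupport hR (by rw [card_compl, hι, hR]; omega) hC
    (by rw [card_compl, hκ, hC]; omega)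

end Blocks

section IndicatorMatrix

variable {ι κ R : Type*} [DecidableEq κ]

/-- The 0/1 matrix with row supports `A`. -/
def indicatorMatrix (R : Type*) [Zero R] [One R] (A : ι → Finset κ) : Matrix ι κ R :=
  of fun i j => if j ∈ A i then 1 else 0

theorem exists_eq_indicatorMatrix [Zero R] [One R] [Finite κ] {B : Matrix ι κ R}
    (hB : ∀ i j, B i j = 0 ∨ B i j = 1) : ∃ A, B = indicatorMatrix R A := by
  classical
  cases nonempty_fintype κ
  refine ⟨fun i => {j | B i j = 1}, ?_⟩
  ext i j
  rcases hB i j with h | h <;> simp +contextual [indicatorMatrix, h]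

theorem indicatorMatrix_injective [Zero R] [One R] [NeZero (1 : R)] :
    Function.Injective (indicatorMatrix R : (ι → Finset κ) → Matrix ι κ R) := by
  intro A A' h
  ext i j
  have hij := congrFun₂ h i j
  by_cases hA : j ∈ A i <;> by_cases hA' : j ∈ A' i <;> simp [indicatorMatrix, hA, hA'] at hij ⊢

theorem permanent_indicatorMatrix {ι : Type*} [Fintype ι] [DecidableEq ι] [CommSemiring R]
    (A : ι → Finset ι) : (indicatorMatrix R A).permanent = #(perfectMatchings A) := by
  rw [← permanent_transpose, permanent, perfectMatchings, ← sum_boole]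
  simp only [transpose_apply, indicatorMatrix, of_apply, prod_ite_zero, prod_const_one, mem_univ,
    true_imp_iff]

theorem of_one_sub_indicatorMatrix [AddGroupWithOne R] [Fintype κ] (A : ι → Finset κ) :
    of (fun _ _ => 1) - indicatorMatrix R A = indicatorMatrix R Aᶜ := by
  ext i j
  by_cases h : j ∈ A i <;> simp [indicatorMatrix, h]

end IndicatorMatrix

section PermutationEquivalence

variable {ι R : Type*} [Fintype ι] [DecidableEq ι]

theorem permMatrix_mul_mul_permMatrix [NonAssocSemiring R] (σ τ : Perm ι) (B : Matrix ι ι R) :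
    σ.permMatrix R * B * τ.permMatrix R = B.submatrix σ τ.symm := by
  rw [Perm.permMatrix, Perm.permMatrix, PEquiv.toMatrix_toPEquiv_mul,
    PEquiv.mul_toMatrix_toPEquiv, submatrix_submatrix, Function.comp_id, Function.id_comp]

theorem submatrix_indicatorMatrix_blockSupport [Zero R] [One R] (s t : Finset ι) (σ τ : Perm ι) :
    (indicatorMatrix R (blockSupport s t)).submatrix σ.symm τ =
      indicatorMatrix R (blockSupport (s.map σ.toEmbedding) (t.map τ.symm.toEmbedding)) := by
  ext i j
  simp only [submatrix_apply, indicatorMatrix, of_apply, mem_blockSupport, mem_map_equiv,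
    Equiv.symm_symm]

theorem permMatrix_mul_mul_permMatrix_eq_iff [NonAssocSemiring R] [NeZero (1 : R)]
    {A : ι → Finset ι} {s t : Finset ι} {σ τ : Perm ι} :
    σ.permMatrix R * indicatorMatrix R A * τ.permMatrix R =
        indicatorMatrix R (blockSupport s t) ↔
      A = blockSupport (s.map σ.toEmbedding) (t.map τ.symm.toEmbedding) := by
  rw [permMatrix_mul_mul_permMatrix, ← (indicatorMatrix_injective (R := R)).eq_iff,
    ← submatrix_indicatorMatrix_blockSupport]
  exact (eq_symm_apply (reindex σ.symm τ) (y := indicatorMatrix R A)).symm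

theorem exists_permMatrix_mul_mul_permMatrix_eq_iff [NonAssocSemiring R] [NeZero (1 : R)]
    {A : ι → Finset ι} {s : Finset ι} :
    (∃ σ τ : Perm ι, σ.permMatrix R * indicatorMatrix R A * τ.permMatrix R =
        of fun i j => if i ∈ s ↔ j ∈ s then 1 else 0) ↔
      ∃ S C, #S = #s ∧ #C = #s ∧ A = blockSupport S C := by
  have hblock : (of fun i j => if i ∈ s ↔ j ∈ s then (1 : R) else 0) =
      indicatorMatrix R (blockSupport s s) := by
    simp only [indicatorMatrix, mem_blockSupport]
  rw [hblock]
  simp only [permMatrix_mul_mul_permMatrix_eq_iff]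
  constructor
  · rintro ⟨σ, τ, h⟩
    exact ⟨_, _, card_map _, card_map _, h⟩
  · rintro ⟨S, C, hS, hC, rfl⟩
    obtain ⟨σ, rfl⟩ := exists_equiv_map_eq hS.symm (by rw [card_compl, card_compl, hS])
    obtain ⟨τ, rfl⟩ := exists_equiv_map_eq hC.symm (by rw [card_compl, card_compl, hC])
    exact ⟨σ, τ.symm, rfl⟩

end PermutationEquivalence

theorem perm_eq_permanent {n : ℕ} (M : Matrix (Fin n) (Fin n) ℤ) : perm M = M.permanent :=
  M.permanent_transpose

theorem stmt_12_general {ι R : Type*} [Fintype ι] [DecidableEq ι] [CommRing R] [CharZero R]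
    {m : ℕ} (hι : Fintype.card ι = 2 * m) {s : Finset ι} (hs : #s = m) (B : Matrix ι ι R)
    (hB : ∀ i j, B i j = 0 ∨ B i j = 1) :
    B.permanent * (of (fun _ _ => 1) - B).permanent = (m ! : R) ^ 4 ↔
      ∃ σ τ : Perm ι, σ.permMatrix R * B * τ.permMatrix R =
        of fun i j => if i ∈ s ↔ j ∈ s then 1 else 0 := by
  obtain ⟨A, rfl⟩ := exists_eq_indicatorMatrix hB
  rw [exists_permMatrix_mul_mul_permMatrix_eq_iff, of_one_sub_indicatorMatrix,
    permanent_indicatorMatrix, permanent_indicatorMatrix, hs,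
    ← card_perfectMatchings_mul_card_compl_eq_iff hι hι]
  norm_cast

/-- For even `n > 0` and an `n×n` (0,1)-matrix `B`, one has
`per(B)·per(Jₙ - B) = ((n/2)!)⁴` iff there are permutation matrices `P, Q` with
`P·B·Q = J_{n/2} ⊕ J_{n/2}` (block diagonal with two `(n/2)×(n/2)` all-ones blocks). -/
theorem stmt_12 (n : ℕ) (hn : 0 < n) (hne : Even n) (B : Matrix (Fin n) (Fin n) ℤ)
    (hB : ∀ i j, B i j = 0 ∨ B i j = 1) :
    perm B * perm (Jmat n - B) = ((n / 2)! : ℤ) ^ 4 ↔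
      ∃ σ τ : Equiv.Perm (Fin n),
        (σ.permMatrix ℤ) * B * (τ.permMatrix ℤ) =
          Matrix.of (fun i j : Fin n => if (((i : ℕ) < n / 2) ↔ ((j : ℕ) < n / 2)) then (1 : ℤ) else 0) := by
  have hs : #{i : Fin n | (i : ℕ) < n / 2} = n / 2 :=
    Fin.card_filter_val_lt.trans (min_eq_right (Nat.div_le_self n 2))
  simpa only [perm_eq_permanent, Jmat, mem_filter_univ] using
    stmt_12_general ((Fintype.card_fin n).trans (Nat.two_mul_div_two_of_even hne).symm) hs B hB
end
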